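/- Let $p$ be a prime, $q$ a power of $p$ (with $q>1$), and $M$ a prime with $\gcd(M,q)=1$. On $\mathbb F_{q^2}$ write $\bar a=a^q$, and extend this coefficientwise to polynomials and entrywise to matrices. For a polynomial $f$ of degree $d$ over $\mathbb F_{q^2}$ with $f(0)\neq 0$ put $\tilde f(t)=\overline{f(0)}^{-1}\,t^d\,\bar f(t^{-1})$. A monic irreducible $f$ over $\mathbb F_{q^2}$ with $f(0)\ne 0$ and $\tilde f=f$ is called SCIM. A SCIM polynomial $f$ of degree $d$ is an $\widetilde M$-power polynomial if $f(x^M)$ has a SCIM factor of degree $d$; a monic irreducible $g$ of degree $d$ over $\mathbb F_{q^2}$ is an $M$-power polynomial if $g(x^M)$ has an irreducible factor of degree $d$ over $\mathbb F_{q^2}$. For $d\ge 1$ let - $\widetilde N_M(q,d)$ be the number of $\widetilde M$-power SCIM polynomials of degree $d$; - $\widetilde S'_M(d,q)$ be the number of SCIM polynomials of degree $d$ that are not $\widetilde M$-power polynomials; - $\widetilde R_M(q,d)$ be the number of unordered pairs $\{g,\tilde g\}$ with $g$ monic irreducible of degree $d$ over $\mathbb F_{q^2}$, $g(0)\neq 0$,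 $g\neq\tilde g$, and $g$ an $M$-power polynomial; - $S'_M(d,q)$ be the number of unordered pairs $\{g,\tilde g\}$ with $g$ monic irreducible of degree $d$ over $\mathbb F_{q^2}$, $g(0)\neq 0$, $g\neq\tilde g$, and $g$ not an $M$-power polynomial. Let $U(n,q^2)=\{A\in GL(n,\mathbb F_{q^2}) : A\Lambda_n\bar A^{t}=\Lambda_n\}$, where $\Lambda_n$ is the $n\times n$ matrix with $1$'s on the anti-diagonal and $0$'s elsewhere. For $n\ge1$ let $css_U^M(n,q)$ be the number of conjugacy classes of $U(n,q^2)$ consisting of semisimple matrices (squarefree minimal polynomial over $\mathbb F_{q^2}$) of the form $\alpha^M$ with $\alpha\in U(n,q^2)$. Then the four infinite products below converge in $\mathbb Q[[z]]$ (coefficientwise, each coefficient being eventually constant) and $$1+\sum_{n\ge1}css_U^M(n,q)\,z^n=\prod_{d\text{ odd}}(1-z^d)^{-\widetilde N_M(q,d)}\prod_{d\ge1}(1-z^{2d})^{-\widetilde R_M(q,d)}\prod_{d\text{ odd}}(1-z^{dM})^{-\widetilde S'_M(d,q)}\prod_{d\ge1}(1-z^{2dM})^{-S'_M(d,q)},$$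 where $d$ odd means $d=1,3,5,\dots$ -/

import Mathlib

open Polynomial Matrix

noncomputable section

/-- `f̃(t) = conj(f(0))⁻¹ · t^(deg f) · f̄(1/t)`, where the conjugation `σ` is applied
coefficientwise. Only meaningful when `f(0) ≠ 0`. -/
def tildePoly {F : Type*} [Field F] (σ : F →+* F) (f : F[X]) : F[X] :=
  Polynomial.C (σ (f.coeff 0))⁻¹ * (f.map σ).reverse

/-- A self-conjugate irreducible monic (SCIM) polynomial (with nonzero constant term). -/
def IsSCIM {F : Type*} [Field F] (σ : F →+* F) (f : F[X]) : Prop :=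
  f.Monic ∧ Irreducible f ∧ f.coeff 0 ≠ 0 ∧ tildePoly σ f = f

/-- An `M̃`-power polynomial: a SCIM polynomial `f` such that `f(x^M)` has a SCIM factor of
degree `deg f`. -/
def IsMtildePowerPoly {F : Type*} [Field F] (σ : F →+* F) (M : ℕ) (f : F[X]) : Prop :=
  IsSCIM σ f ∧ ∃ g : F[X], IsSCIM σ g ∧ g.natDegree = f.natDegree ∧ g ∣ f.comp (X ^ M)

/-- `Ñ_M(q,d)`: the number of `M̃`-power SCIM polynomials of degree `d`. -/
def NtildeM {F : Type*} [Field F] (σ : F →+* F) (M d : ℕ) : ℕ :=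
  Nat.card {f : F[X] // IsMtildePowerPoly σ M f ∧ f.natDegree = d}

/-- A monic irreducible polynomial `g` with `g(0) ≠ 0` and `g ≠ g̃`. -/
def IsNonSelfConj {F : Type*} [Field F] (σ : F →+* F) (g : F[X]) : Prop :=
  g.Monic ∧ Irreducible g ∧ g.coeff 0 ≠ 0 ∧ g ≠ tildePoly σ g

/-- An `M`-power polynomial: a monic irreducible `g` such that `g(x^M)` has an irreducible
factor of degree `deg g`. -/
def IsMPowerPoly {F : Type*} [Field F] (M : ℕ) (g : F[X]) : Prop :=
  g.Monic ∧ Irreducible g ∧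
    ∃ h : F[X], Irreducible h ∧ h.natDegree = g.natDegree ∧ h ∣ g.comp (X ^ M)

/-- `R̃_M(q,d)`: the number of unordered pairs `{g, g̃}` with `g` a monic irreducible
degree-`d` `M`-power polynomial, `g(0) ≠ 0` and `g ≠ g̃`. -/
def RtildeM {F : Type*} [Field F] (σ : F →+* F) (M d : ℕ) : ℕ :=
  Nat.card {P : Sym2 F[X] // ∃ g : F[X], IsNonSelfConj σ g ∧ g.natDegree = d ∧
    IsMPowerPoly M g ∧ P = s(g, tildePoly σ g)}

/-- `S̃'_M(d,q)`: the number of SCIM polynomials of degree `d` that are not `M̃`-power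
polynomials. -/
def StildePrimeM {F : Type*} [Field F] (σ : F →+* F) (M d : ℕ) : ℕ :=
  Nat.card {f : F[X] // IsSCIM σ f ∧ f.natDegree = d ∧ ¬ IsMtildePowerPoly σ M f}

/-- `S'_M(d,q)`: the number of unordered pairs `{g, g̃}` with `g` monic irreducible of
degree `d`, `g(0) ≠ 0`, `g ≠ g̃`, and `g` not an `M`-power polynomial. -/
def SPrimeM {F : Type*} [Field F] (σ : F →+* F) (M d : ℕ) : ℕ :=
  Nat.card {P : Sym2 F[X] // ∃ g : F[X], IsNonSelfConj σ g ∧ g.natDegree = d ∧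
    ¬ IsMPowerPoly M g ∧ P = s(g, tildePoly σ g)}

/-- The anti-diagonal matrix `Λ_n` with all anti-diagonal entries `1`. -/
def antidiagMat (F : Type*) [Field F] (n : ℕ) : Matrix (Fin n) (Fin n) F :=
  Matrix.of fun i j => if (i : ℕ) + (j : ℕ) + 1 = n then 1 else 0

/-- Membership in the unitary group `U(n,q²)`:
`A` invertible and `A · Λ_n · Āᵗ = Λ_n`, where `Ā` applies `σ` entrywise. -/
def IsUnitaryMat {F : Type*} [Field F] (σ : F →+* F) {n : ℕ}
    (A : Matrix (Fin n) (Fin n) F) : Prop :=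
  IsUnit A ∧ A * antidiagMat F n * (A.map σ)ᵀ = antidiagMat F n

/-- Conjugacy in the unitary group. -/
def ConjU {F : Type*} [Field F] (σ : F →+* F) {n : ℕ}
    (A B : Matrix (Fin n) (Fin n) F) : Prop :=
  ∃ P : Matrix (Fin n) (Fin n) F, IsUnitaryMat σ P ∧ B = P * A * P⁻¹

/-- `A` is an `M`-th power in the unitary group. -/
def IsMPowerInU {F : Type*} [Field F] (σ : F →+* F) (M : ℕ) {n : ℕ}
    (A : Matrix (Fin n) (Fin n) F) : Prop :=
  ∃ B : Matrix (Fin n) (Fin n) F, IsUnitaryMat σ B ∧ B ^ M = A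

/-- Number of `U(n,q²)`-conjugacy classes of semisimple matrices in `U(n,q²)` that are
`M`-th powers in `U(n,q²)`. -/
def numSSPowerClasses {F : Type*} [Field F] (σ : F →+* F) (M n : ℕ) : ℕ :=
  Nat.card (Quot (fun A B : {A : Matrix (Fin n) (Fin n) F // IsUnitaryMat σ A ∧
    Squarefree (minpoly F A) ∧ IsMPowerInU σ M A} => ConjU σ A.1 B.1))

/-- The topology of the formal power series ring `ℚ[[z]]`: coefficientwise convergence, the
coefficient field `ℚ` being discrete (so each coefficient is eventually constant). -/
instance formalPowerSeriesTopology : TopologicalSpace (PowerSeries ℚ) :=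
  @PowerSeries.WithPiTopology.instTopologicalSpace ℚ ⊥

end

/-!
Over a finite field all nondegenerate hermitian forms of a given rank are isometric, so semisimple
unitary matrices with the same characteristic polynomial are conjugate in the unitary group, and
one has to find the characteristic polynomials of the semisimple `M`-th powers `α ^ M`. As `M` is
invertible in `F`, such an `α` is semisimple too. The `M`-th power of a root of an irreducible
polynomial `g` has an irreducible minimal polynomial `f`, and it contributes `f ^ (deg g / deg f)`
to the characteristic polynomial, where `f(x ^ M)` is either irreducible or has a factor of
degree `deg f`. Matching these contributions with the conjugation `g ↦ g̃` shows that `f` may occur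
with arbitrary multiplicity when it is an `M`-power polynomial (an `M̃`-power polynomial, if
`f̃ = f`), and only with multiplicity divisible by `M` otherwise. Hermitian trace forms on root
fields and hyperbolic sums realise all polynomials `c = c̃` with these multiplicities. They form the
free commutative monoid on the pairwise coprime atoms `f`, `f f̃`, `f ^ M`, `(f f̃) ^ M`, and
counting by degree turns unique factorisation into an Euler product with one family of factors for
each kind of atom.
-/

/-! ### Hermitian units and unitary conjugacy in finite rings with involution -/

section BinaryQuadraticForm

theorem exists_sq_add_mul_add_mul_sq_eq_of_field {k : Type*} [Field k] [Finite k] {n : k}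
    (hn : 1 - 4 * n ≠ 0) (h : k) : ∃ a b : k, a ^ 2 + a * b + n * b ^ 2 = h := by
  have := Fintype.ofFinite k
  by_cases h2 : ringChar k = 2
  · obtain ⟨a, ha⟩ := FiniteField.isSquare_of_char_two h2 h
    exact ⟨a, 0, by rw [ha]; ring⟩
  · have two_ne_zero : (2 : k) ≠ 0 := Ring.two_ne_zero h2
    obtain ⟨u, v, huv⟩ := FiniteField.exists_root_sum_quadratic
      (f := (X ^ 2 - C (4 * h) : k[X])) (g := C (4 * n - 1) * X ^ 2)
      (degree_X_pow_sub_C (by norm_num) _)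
      (by rw [degree_C_mul_X_pow 2 (fun h0 => hn (by linear_combination -h0))]; rfl)
      (FiniteField.odd_card_of_char_ne_two h2)
    simp only [eval_sub, eval_pow, eval_X, eval_C, eval_mul] at huv
    refine ⟨(u - v) / 2, v, ?_⟩
    field_simp
    linear_combination huv

variable {S : Type*} [CommRing S]

theorem exists_isNilpotent_sq_add_mul_add_mul_sq_sub [Finite S] {n : S}
    (hn : IsUnit (1 - 4 * n)) (h : S) :
    ∃ a b : S, IsNilpotent (a ^ 2 + a * b + n * b ^ 2 - h) := by
  have residue_field : ∀ I : MaximalSpectrum S, ∃ a b : S ⧸ I.asIdeal,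
      a ^ 2 + a * b + Ideal.Quotient.mk I.asIdeal n * b ^ 2 = Ideal.Quotient.mk I.asIdeal h := by
    intro I
    let := Ideal.Quotient.field I.asIdeal
    have : Finite (S ⧸ I.asIdeal) := Quotient.finite _
    refine exists_sq_add_mul_add_mul_sq_eq_of_field ?_ _
    have := (hn.map (Ideal.Quotient.mk I.asIdeal)).ne_zero
    rwa [map_sub, map_mul, map_one, map_ofNat] at this
  choose a b hab using residue_field
  let e := IsArtinianRing.quotNilradicalEquivPi S
  have apply_mk (x : S) (I) :
      e (Ideal.Quotient.mk (nilradical S) x) I = Ideal.Quotient.mk I.asIdeal x := rfl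
  obtain ⟨a', ha'⟩ := Ideal.Quotient.mk_surjective (e.symm a)
  obtain ⟨b', hb'⟩ := Ideal.Quotient.mk_surjective (e.symm b)
  refine ⟨a', b', ?_⟩
  rw [← mem_nilradical, ← Ideal.Quotient.eq_zero_iff_mem, map_sub, sub_eq_zero]
  refine e.injective (funext fun I => ?_)
  simp only [map_add, map_mul, map_pow, ha', hb', AlgEquiv.apply_symm_apply, Pi.add_apply,
    Pi.mul_apply, Pi.pow_apply, apply_mk, hab]

theorem exists_one_add_add_mul_sq_eq {n δ : S} (hδ : IsNilpotent δ) :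
    ∃ t, 1 + t + n * t ^ 2 = 1 + δ := by
  obtain ⟨t, ⟨-, ht⟩, -⟩ := existsUnique_nilpotent_sub_and_aeval_eq_zero
    (P := (C n * X ^ 2 + X - C δ : S[X])) (x := (0 : S)) (by simpa using hδ) (by simp)
  simp only [map_sub, map_add, map_mul, map_pow, aeval_X, aeval_C, Algebra.algebraMap_self,
    RingHom.id_apply] at ht
  exact ⟨t, by linear_combination ht⟩

theorem exists_sq_add_mul_add_mul_sq_eq [Finite S] {n h : S} (hn : IsUnit (1 - 4 * n))
    (hh : IsUnit h) : ∃ a b : S, a ^ 2 + a * b + n * b ^ 2 = h := by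
  obtain ⟨a, b, hab⟩ := exists_isNilpotent_sq_add_mul_add_mul_sq_sub hn h
  obtain ⟨v, hv⟩ : IsUnit (a ^ 2 + a * b + n * b ^ 2) := by
    simpa using hab.isUnit_add_left_of_commute hh (Commute.all _ _)
  obtain ⟨t, ht⟩ := exists_one_add_add_mul_sq_eq (n := n) (δ := ↑v⁻¹ * (h - v))
    ((Commute.all _ _).isNilpotent_mul_left (by simpa [hv] using hab.neg))
  -- the form is multiplicative: it is the norm form of `S[x] / (x² - x + n)`
  refine ⟨a - n * b * t, a * t + b + b * t, ?_⟩
  calc _ = (a ^ 2 + a * b + n * b ^ 2) * (1 + t + n * t ^ 2) := by ring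
    _ = v + v * ↑v⁻¹ * (h - v) := by rw [ht, ← hv]; ring
    _ = h := by rw [Units.mul_inv]; ring

end BinaryQuadraticForm

section StarRing

theorem isUnit_of_isUnit_coe_selfAdjoint {A : Type*} [CommRing A] [StarRing A] {x : selfAdjoint A}
    (hx : IsUnit (x : A)) : IsUnit x :=
  IsUnit.of_mul_eq_one ⟨Ring.inverse x, IsSelfAdjoint.ringInverse x.2⟩
    (Subtype.ext (Ring.mul_inverse_cancel _ hx))

theorem exists_mul_star_eq_of_comm {A : Type*} [CommRing A] [StarRing A] [Finite A] {w h : A}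
    (hw : w + star w = 1) (hw' : IsUnit (w - star w)) (hh : IsUnit h) (hs : star h = h) :
    ∃ y, y * star y = h := by
  let n : selfAdjoint A := ⟨w * star w, IsSelfAdjoint.mul_star_self w⟩
  have discriminant : ((1 - 4 * n : selfAdjoint A) : A) = (w - star w) ^ 2 := by
    change 1 - 4 * (w * star w) = _
    linear_combination (-1 - (w + star w)) * hw
  obtain ⟨⟨a, ha⟩, ⟨b, hb⟩, hab⟩ := exists_sq_add_mul_add_mul_sq_eq (n := n) (h := ⟨h, hs⟩)
    (isUnit_of_isUnit_coe_selfAdjoint (by rw [discriminant]; exact hw'.pow 2))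
    (isUnit_of_isUnit_coe_selfAdjoint hh)
  have norm_eq : a ^ 2 + a * b + w * star w * b ^ 2 = h := congrArg Subtype.val hab
  refine ⟨a + b * w, ?_⟩
  rw [star_add, star_mul, selfAdjoint.mem_iff.1 ha, selfAdjoint.mem_iff.1 hb]
  linear_combination a * b * hw + norm_eq

variable {B : Type*} [Ring B] [StarRing B] [Finite B] {w : B}

-- `h` and the central `w` generate a commutative star subring, to which the commutative case
-- applies.
theorem exists_mul_star_eq_and_commute (hwc : ∀ z, Commute z w) (hw : w + star w = 1)
    (hw' : IsUnit (w - star w)) {h : B} (hh : IsUnit h) (hs : star h = h) :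
    ∃ y, y * star y = h ∧ ∀ z, Commute z h → Commute z y := by
  have star_wc (z : B) : Commute z (star w) :=
    eq_sub_of_add_eq' hw ▸ (Commute.one_right z).sub_right (hwc z)
  let S := StarAlgebra.adjoin ℤ {h, w}
  have commute_of_mem {x z : B} (hx : x ∈ S) (hz : Commute z h) : Commute z x := by
    refine (StarSubalgebra.mem_centralizer_iff ℤ).1
      (StarAlgebra.adjoin_le_centralizer_centralizer ℤ _ hx) z ?_ |>.1
    rw [SetLike.mem_coe, StarSubalgebra.mem_centralizer_iff]
    rintro g (rfl | rfl)
    · rw [hs]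
      exact ⟨hz.symm.eq, hz.symm.eq⟩
    · exact ⟨(hwc z).symm.eq, (star_wc z).symm.eq⟩
  have mem_h : h ∈ S := StarAlgebra.subset_adjoin _ _ (by simp)
  have mem_w : w ∈ S := StarAlgebra.subset_adjoin _ _ (by simp)
  let : CommRing S :=
    { (inferInstance : Ring S) with
      mul_comm := fun x y => Subtype.ext
        (commute_of_mem y.2 (commute_of_mem x.2 (Commute.refl h)).symm).eq }
  have isUnit_of_isUnit_coe (x : S) (hx : IsUnit (x : B)) : IsUnit x := by
    rw [isUnit_iff_mem_nonZeroDivisors_of_finite, mem_nonZeroDivisors_iff_right]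
    exact fun z hz => Subtype.ext (hx.mul_left_eq_zero.1 (congrArg Subtype.val hz))
  obtain ⟨y, hy⟩ := exists_mul_star_eq_of_comm (w := (⟨w, mem_w⟩ : S)) (Subtype.ext hw)
    (isUnit_of_isUnit_coe _ hw') (isUnit_of_isUnit_coe ⟨h, mem_h⟩ hh) (Subtype.ext hs)
  exact ⟨y, congrArg Subtype.val hy, fun z hz => commute_of_mem y.2 hz⟩

theorem commute_star_mul_self_of_semiconjBy {R : Type*} [Monoid R] [StarMul R] {a b p : R}
    (ha : a ∈ unitary R) (hb : b ∈ unitary R) (hab : SemiconjBy p a b) :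
    Commute a (star p * p) := by
  have hab' : star p * star b = star a * star p := by rw [← star_mul, ← star_mul, hab.eq]
  calc a * (star p * p) = a * ((star p * star b) * (b * p)) := by
        rw [mul_assoc, ← mul_assoc (star b), Unitary.star_mul_self_of_mem hb, one_mul]
    _ = (a * star a) * (star p * p * a) := by rw [hab', ← hab.eq]; simp only [mul_assoc]
    _ = star p * p * a := by rw [Unitary.mul_star_self_of_mem ha, one_mul]

-- Polar decomposition: `p = u * star y`, where `star p * p = y * star y` and `u` is unitary.
theorem exists_mem_unitary_semiconjBy (hwc : ∀ z, Commute z w) (hw : w + star w = 1)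
    (hw' : IsUnit (w - star w)) {a b p : B} (ha : a ∈ unitary B) (hb : b ∈ unitary B)
    (hp : IsUnit p) (hab : SemiconjBy p a b) : ∃ u ∈ unitary B, SemiconjBy u a b := by
  have gram_comm : Commute a (star p * p) := commute_star_mul_self_of_semiconjBy ha hb hab
  have gram_star : star (star p * p) = star p * p := by rw [star_mul, star_star]
  obtain ⟨y, hy, hyc⟩ := exists_mul_star_eq_and_commute hwc hw hw' (hp.star.mul hp) gram_star
  have comm_star_y : Commute a (star y) := by
    simpa using (hyc (star a) (gram_star ▸ gram_comm.star_star)).star_star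
  have y_isUnit : IsUnit y :=
    isUnit_iff_exists_inv.2 (((hp.star.mul hp)).exists_right_inv.imp' (star y * ·)
      fun c hc => by rw [← mul_assoc, hy, hc])
  obtain ⟨v, hv⟩ := y_isUnit.star
  rw [← hv] at hy comm_star_y
  have star_v : star (v : B) = y := by rw [hv, star_star]
  have comm_inv : SemiconjBy (↑v⁻¹ : B) a a := comm_star_y.symm.units_inv_left
  refine ⟨p * ↑v⁻¹, ?_, hab.mul_left comm_inv⟩
  rw [(hp.mul v⁻¹.isUnit).mem_unitary_iff_star_mul_self]
  calc star (p * ↑v⁻¹) * (p * ↑v⁻¹) = star (↑v⁻¹ : B) * (star p * p) * ↑v⁻¹ := by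
        simp only [star_mul, mul_assoc]
    _ = star (v * ↑v⁻¹ : B) * (v * ↑v⁻¹) := by rw [← hy, ← star_v, star_mul]; simp only [mul_assoc]
    _ = 1 := by rw [Units.mul_inv, star_one, one_mul]

end StarRing

/-! ### The unitary groups of a finite field -/

section Unitary

variable {F : Type*} [Field F] {n : ℕ}

theorem antidiagMat_apply (i j : Fin n) :
    antidiagMat F n i j = if j = Fin.rev i then 1 else 0 := by
  have : ((i : ℕ) + (j : ℕ) + 1 = n) ↔ j = Fin.rev i := by
    rw [Fin.ext_iff, Fin.val_rev]; omega
  simp only [antidiagMat, Matrix.of_apply, this]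

theorem antidiagMat_mul_self : antidiagMat F n * antidiagMat F n = 1 := by
  ext i j
  simp only [Matrix.mul_apply, antidiagMat_apply, Matrix.one_apply, ite_mul, one_mul, zero_mul,
    Finset.sum_ite_eq', Finset.mem_univ, if_true, Fin.rev_rev, eq_comm]

theorem isUnit_antidiagMat : IsUnit (antidiagMat F n) :=
  IsUnit.of_mul_eq_one _ antidiagMat_mul_self

theorem transpose_antidiagMat : (antidiagMat F n)ᵀ = antidiagMat F n := by
  ext i j
  simp only [Matrix.transpose_apply, antidiagMat, Matrix.of_apply, Nat.add_comm (i : ℕ)]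

theorem map_antidiagMat (σ : F →+* F) : (antidiagMat F n).map σ = antidiagMat F n := by
  ext i j
  simp only [Matrix.map_apply, antidiagMat_apply, apply_ite σ, map_one, map_zero]

theorem matrix_map_map_of_involutive {σ : F →+* F} (hσ : Function.Involutive σ) {ι κ : Type*}
    (A : Matrix ι κ F) : (A.map σ).map σ = A := by
  rw [Matrix.map_map, hσ.comp_self, Matrix.map_id]

/-- The adjoint involution `X ↦ Λ X̄ᵗ Λ` of the hermitian form with Gram matrix `Λ = Λ⁻¹`; its
unitary elements are the elements of `U(n, q²)`. -/
@[reducible] def unitaryStarRing {σ : F →+* F} (hσ : Function.Involutive σ) (n : ℕ) :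
    StarRing (Matrix (Fin n) (Fin n) F) where
  star X := antidiagMat F n * (X.map σ)ᵀ * antidiagMat F n
  star_involutive X := by
    change antidiagMat F n * ((antidiagMat F n * (X.map σ)ᵀ * antidiagMat F n).map σ)ᵀ *
      antidiagMat F n = X
    rw [Matrix.map_mul, Matrix.map_mul, map_antidiagMat, ← Matrix.transpose_map,
      matrix_map_map_of_involutive hσ, Matrix.transpose_mul, Matrix.transpose_mul,
      transpose_antidiagMat, Matrix.transpose_transpose]
    calc _ = (antidiagMat F n * antidiagMat F n) * X * (antidiagMat F n * antidiagMat F n) := by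
          simp only [Matrix.mul_assoc]
      _ = X := by rw [antidiagMat_mul_self, Matrix.one_mul, Matrix.mul_one]
  star_mul X Y := by
    change antidiagMat F n * ((X * Y).map σ)ᵀ * antidiagMat F n =
      (antidiagMat F n * (Y.map σ)ᵀ * antidiagMat F n) *
        (antidiagMat F n * (X.map σ)ᵀ * antidiagMat F n)
    calc _ = antidiagMat F n * (Y.map σ)ᵀ * 1 * (X.map σ)ᵀ * antidiagMat F n := by
          rw [Matrix.map_mul, Matrix.transpose_mul, Matrix.mul_one]
          simp only [Matrix.mul_assoc]
      _ = _ := by rw [← antidiagMat_mul_self]; simp only [Matrix.mul_assoc]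
  star_add X Y := by
    change antidiagMat F n * ((X + Y).map σ)ᵀ * antidiagMat F n =
      antidiagMat F n * (X.map σ)ᵀ * antidiagMat F n +
        antidiagMat F n * (Y.map σ)ᵀ * antidiagMat F n
    rw [Matrix.map_add _ (map_add σ), Matrix.transpose_add, Matrix.mul_add, Matrix.add_mul]

variable {σ : F →+* F}

theorem star_unitaryStarRing (hσ : Function.Involutive σ) (X : Matrix (Fin n) (Fin n) F) :
    letI := unitaryStarRing hσ n
    star X = antidiagMat F n * (X.map σ)ᵀ * antidiagMat F n :=
  rfl

theorem isUnitaryMat_iff_mem_unitary (hσ : Function.Involutive σ)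
    {X : Matrix (Fin n) (Fin n) F} :
    letI := unitaryStarRing hσ n
    IsUnitaryMat σ X ↔ X ∈ unitary (Matrix (Fin n) (Fin n) F) := by
  let := unitaryStarRing hσ n
  have mul_star_iff : X * star X = 1 ↔ X * antidiagMat F n * (X.map σ)ᵀ = antidiagMat F n := by
    rw [star_unitaryStarRing, ← antidiagMat_mul_self (F := F), ← Matrix.mul_assoc,
      ← Matrix.mul_assoc, isUnit_antidiagMat.mul_left_inj]
  rw [Unitary.mem_iff, IsUnitaryMat, mul_star_iff, mul_eq_one_comm, mul_star_iff, and_self,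
    and_iff_right_iff_imp]
  exact fun h => IsUnit.of_mul_eq_one _ (mul_star_iff.2 h)

theorem exists_add_map_eq_one (hσ : Function.Involutive σ) (hne : ∃ x, σ x ≠ x) :
    ∃ w, w + σ w = 1 ∧ w - σ w ≠ 0 := by
  obtain ⟨c, hc, trace_ne_zero⟩ : ∃ c, σ c ≠ c ∧ c + σ c ≠ 0 := by
    obtain ⟨c, hc⟩ := hne
    by_cases trace_c : c + σ c = 0
    · refine ⟨c + 1, by simpa using hc, fun h => hc ?_⟩
      rw [map_add, map_one] at h
      linear_combination (c + 1) * trace_c - c * h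
    · exact ⟨c, hc, trace_c⟩
  have map_trace : σ (c + σ c) = c + σ c := by rw [map_add, hσ, add_comm]
  refine ⟨c / (c + σ c), ?_, ?_⟩
  · rw [map_div₀, map_trace, ← add_div, div_self trace_ne_zero]
  · rw [map_div₀, map_trace, ← sub_div]
    exact div_ne_zero (sub_ne_zero.2 hc.symm) trace_ne_zero

theorem exists_central_add_star_eq_one (hσ : Function.Involutive σ) (hne : ∃ x, σ x ≠ x) (n : ℕ) :
    letI := unitaryStarRing hσ n
    ∃ w : Matrix (Fin n) (Fin n) F,
      (∀ Z, Commute Z w) ∧ w + star w = 1 ∧ IsUnit (w - star w) := by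
  let := unitaryStarRing hσ n
  obtain ⟨w, trace_w, hw⟩ := exists_add_map_eq_one hσ hne
  have scalar_commute (a : F) (Z : Matrix (Fin n) (Fin n) F) : Commute Z (scalar (Fin n) a) :=
    (Matrix.scalar_commute _ (Commute.all _) _).symm
  have star_scalar : star (scalar (Fin n) w) = scalar (Fin n) (σ w) := by
    rw [star_unitaryStarRing, Matrix.scalar_apply, Matrix.diagonal_map (map_zero σ),
      Matrix.diagonal_transpose, ← Matrix.scalar_apply, (scalar_commute _ _).eq, Matrix.mul_assoc,
      antidiagMat_mul_self, Matrix.mul_one]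
  refine ⟨scalar (Fin n) w, scalar_commute w, ?_, ?_⟩
  · rw [star_scalar, ← map_add, trace_w, map_one]
  · rw [star_scalar, ← map_sub]
    exact (IsUnit.mk0 _ hw).map _

variable [Finite F]

theorem exists_eq_mul_antidiagMat_mul (hσ : Function.Involutive σ) (hne : ∃ x, σ x ≠ x)
    {J : Matrix (Fin n) (Fin n) F} (hJ : IsUnit J) (hs : (J.map σ)ᵀ = J) :
    ∃ Y, IsUnit Y ∧ J = Y * antidiagMat F n * (Y.map σ)ᵀ := by
  let := unitaryStarRing hσ n
  obtain ⟨w, hwc, hw, hw'⟩ := exists_central_add_star_eq_one hσ hne n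
  obtain ⟨Y, hY, -⟩ := exists_mul_star_eq_and_commute hwc hw hw' (h := J * antidiagMat F n)
    (hJ.mul isUnit_antidiagMat) (by
      rw [star_unitaryStarRing, Matrix.map_mul, map_antidiagMat, Matrix.transpose_mul,
        transpose_antidiagMat, hs, ← Matrix.mul_assoc, antidiagMat_mul_self, Matrix.one_mul])
  rw [star_unitaryStarRing, ← Matrix.mul_assoc, isUnit_antidiagMat.mul_left_inj,
    ← Matrix.mul_assoc] at hY
  refine ⟨Y, ?_, hY.symm⟩
  rw [← hY, Matrix.mul_assoc, Matrix.isUnit_iff_isUnit_det, Matrix.det_mul] at hJ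
  exact (Matrix.isUnit_iff_isUnit_det _).2 (isUnit_of_mul_isUnit_left hJ)

theorem conjU_of_semiconjBy (hσ : Function.Involutive σ) (hne : ∃ x, σ x ≠ x)
    {A B P : Matrix (Fin n) (Fin n) F} (hA : IsUnitaryMat σ A) (hB : IsUnitaryMat σ B)
    (hP : IsUnit P) (hPAB : SemiconjBy P A B) : ConjU σ A B := by
  let := unitaryStarRing hσ n
  obtain ⟨w, hwc, hw, hw'⟩ := exists_central_add_star_eq_one hσ hne n
  rw [isUnitaryMat_iff_mem_unitary hσ] at hA hB
  obtain ⟨Q, hQ, hQAB⟩ := exists_mem_unitary_semiconjBy hwc hw hw' hA hB hP hPAB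
  rw [← isUnitaryMat_iff_mem_unitary hσ] at hQ
  refine ⟨Q, hQ, ?_⟩
  rw [hQAB.eq, Matrix.mul_nonsing_inv_cancel_right _ _ ((Matrix.isUnit_iff_isUnit_det _).1 hQ.1)]

end Unitary

/-! ### Semisimple endomorphisms and their characteristic polynomials -/

section Semisimple

universe u v

variable {F : Type u} [Field F]

section

variable {V : Type*} [AddCommGroup V] [Module F V] [FiniteDimensional F V] {a : Module.End F V}
  {g : F[X]}

theorem irreducible_dvd_minpoly_of_dvd_charpoly (hg : Irreducible g) (hd : g ∣ a.charpoly) :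
    g ∣ minpoly F a := by
  have : Fact (Irreducible g) := ⟨hg⟩
  let b := Module.finBasis F V
  let A := LinearMap.toMatrix b b a
  let B := A.map (algebraMap F (AdjoinRoot g))
  have root_charpoly : B.charpoly.IsRoot (AdjoinRoot.root g) := by
    rw [Matrix.charpoly_map, IsRoot, eval_map_algebraMap, LinearMap.charpoly_toMatrix,
      AdjoinRoot.aeval_eq, AdjoinRoot.mk_eq_zero]
    exact hd
  have root_minpoly : (minpoly (AdjoinRoot g) B).IsRoot (AdjoinRoot.root g) := by
    rwa [← Matrix.minpoly_toLin', ← Module.End.hasEigenvalue_iff_isRoot,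
      Module.End.hasEigenvalue_iff_isRoot_charpoly, Matrix.charpoly_toLin']
  have minpoly_dvd : minpoly (AdjoinRoot g) B ∣
      (minpoly F A).map (algebraMap F (AdjoinRoot g)) := by
    apply minpoly.dvd
    have := aeval_algHom_apply (Algebra.ofId F (AdjoinRoot g)).mapMatrix A (minpoly F A)
    rwa [minpoly.aeval, map_zero, ← aeval_map_algebraMap (AdjoinRoot g)] at this
  have := root_minpoly.dvd minpoly_dvd
  rwa [IsRoot, eval_map_algebraMap, AdjoinRoot.aeval_eq, AdjoinRoot.mk_eq_zero,
    LinearMap.minpoly_toMatrix] at this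

theorem exists_ne_zero_aeval_apply_eq_zero (hg : Irreducible g) (hd : g ∣ a.charpoly) :
    ∃ v : V, v ≠ 0 ∧ aeval a g v = 0 := by
  obtain ⟨h, hh⟩ := irreducible_dvd_minpoly_of_dvd_charpoly hg hd
  have minpoly_ne_zero : minpoly F a ≠ 0 := minpoly.ne_zero (Algebra.IsIntegral.isIntegral a)
  have aeval_h_ne_zero : aeval a h ≠ 0 := by
    intro h0
    have h_ne_zero : h ≠ 0 := right_ne_zero_of_mul (hh ▸ minpoly_ne_zero)
    have : g * h ∣ 1 * h := by rw [← hh, one_mul]; exact minpoly.dvd F a h0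
    exact hg.not_isUnit (isUnit_of_dvd_one ((mul_dvd_mul_iff_right h_ne_zero).1 this))
  obtain ⟨u, hu⟩ : ∃ u, aeval a h u ≠ 0 := by
    by_contra! hc
    exact aeval_h_ne_zero (LinearMap.ext hc)
  refine ⟨aeval a h u, hu, ?_⟩
  rw [← Module.End.mul_apply, ← map_mul, ← hh, minpoly.aeval, LinearMap.zero_apply]

theorem exists_adjoinRoot_linearMap_injective (hg : Irreducible g) (hm : g.Monic)
    (hd : g ∣ a.charpoly) : ∃ φ : AdjoinRoot g →ₗ[F] V, Function.Injective φ ∧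
      ∀ x, φ (AdjoinRoot.root g * x) = a (φ x) := by
  have : Fact (Irreducible g) := ⟨hg⟩
  obtain ⟨v, hv, hgv⟩ := exists_ne_zero_aeval_apply_eq_zero hg hd
  let φ : AdjoinRoot g →ₗ[F] V :=
    LinearMap.applyₗ v ∘ₗ (aeval a).toLinearMap ∘ₗ AdjoinRoot.modByMonicHom hm
  have apply_mk (h : F[X]) : φ (AdjoinRoot.mk g h) = aeval a h v := by
    calc φ (AdjoinRoot.mk g h) = aeval a (h %ₘ g) v := by simp [φ, AdjoinRoot.modByMonicHom_mk]
      _ = aeval a (h %ₘ g + g * (h /ₘ g)) v := by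
        rw [mul_comm g, map_add, map_mul, LinearMap.add_apply, Module.End.mul_apply, hgv,
          map_zero, add_zero]
      _ = aeval a h v := by rw [modByMonic_add_div]
  have apply_mk_mul (h : F[X]) (x : AdjoinRoot g) :
      φ (AdjoinRoot.mk g h * x) = aeval a h (φ x) := by
    obtain ⟨k, rfl⟩ := AdjoinRoot.mk_surjective x
    rw [← map_mul, apply_mk, apply_mk, map_mul, Module.End.mul_apply]
  refine ⟨φ, ?_, fun x => by simpa using apply_mk_mul X x⟩
  rw [← LinearMap.ker_eq_bot, LinearMap.ker_eq_bot']
  intro x hx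
  by_contra hx0
  obtain ⟨k, hk⟩ := AdjoinRoot.mk_surjective x⁻¹
  have hxk := apply_mk_mul k x
  rw [hx, map_zero, hk, inv_mul_cancel₀ hx0, ← map_one (AdjoinRoot.mk g), apply_mk, map_one] at hxk
  exact hv hxk

theorem exists_eq_conj_prodMap_mulLeft_root (ha : a.IsSemisimple) (hg : Irreducible g)
    (hm : g.Monic) (hd : g ∣ a.charpoly) :
    ∃ (T : Submodule F V) (b : Module.End F T) (e : (AdjoinRoot g × T) ≃ₗ[F] V),
      b.IsSemisimple ∧ a = e.conj ((LinearMap.mulLeft F (AdjoinRoot.root g)).prodMap b) := by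
  obtain ⟨φ, φ_inj, φ_root⟩ := exists_adjoinRoot_linearMap_injective hg hm hd
  have range_mem : LinearMap.range φ ∈ a.invtSubmodule := by
    rintro _ ⟨x, rfl⟩
    exact ⟨AdjoinRoot.root g * x, φ_root x⟩
  obtain ⟨T, hT, hc⟩ := Module.End.isSemisimple_iff.1 ha _ range_mem
  let e : (AdjoinRoot g × T) ≃ₗ[F] V := ((LinearEquiv.ofInjective φ φ_inj).prodCongr
    (LinearEquiv.refl F T)).trans (Submodule.prodEquivOfIsCompl _ _ hc)
  have e_apply (x : AdjoinRoot g) (t : T) : e (x, t) = φ x + t := rfl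
  let b : Module.End F T := a.restrict ((Module.End.mem_invtSubmodule a).1 hT)
  have coe_b_apply (t : T) : (b t : V) = a t := rfl
  refine ⟨T, b, e, ha.restrict hT, LinearMap.ext fun v => ?_⟩
  obtain ⟨⟨x, t⟩, rfl⟩ := e.surjective v
  rw [LinearEquiv.conj_apply_apply, e.symm_apply_apply, LinearMap.prodMap_apply, e_apply, e_apply,
    map_add, LinearMap.mulLeft_apply, φ_root, coe_b_apply]

theorem charpoly_eq_pow_of_aeval_eq_zero (hg : Irreducible g) (hm : g.Monic) (h : aeval a g = 0) :
    a.charpoly = g ^ (Module.finrank F V / g.natDegree) := by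
  classical
  have eq_of_mem : ∀ f ∈ UniqueFactorizationMonoid.normalizedFactors a.charpoly, f = g := by
    intro f hf
    have f_irr := UniqueFactorizationMonoid.irreducible_of_normalized_factor f hf
    have f_dvd : f ∣ g := (irreducible_dvd_minpoly_of_dvd_charpoly f_irr
      (UniqueFactorizationMonoid.dvd_of_mem_normalizedFactors hf)).trans (minpoly.dvd F a h)
    rw [← UniqueFactorizationMonoid.normalize_normalized_factor f hf, ← hm.normalize_eq_self]
    exact normalize_eq_normalize_iff_associated.2 (f_irr.associated_of_dvd hg f_dvd)
  have charpoly_eq := UniqueFactorizationMonoid.prod_normalizedFactors_eq a.charpoly_monic.ne_zero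
  rw [a.charpoly_monic.normalize_eq_self, Multiset.eq_replicate_of_mem eq_of_mem,
    Multiset.prod_replicate] at charpoly_eq
  have degree_eq := congrArg natDegree charpoly_eq
  rw [natDegree_pow, LinearMap.charpoly_natDegree] at degree_eq
  rw [← degree_eq, Nat.mul_div_cancel _ hg.natDegree_pos, charpoly_eq]

end

theorem finrank_adjoinRoot (g : F[X]) : Module.finrank F (AdjoinRoot g) = g.natDegree :=
  finrank_quotient_span_eq_natDegree

/-- The characteristic polynomial of multiplication by `α ^ M` on `F(α)`, where `α` is a root of
the irreducible polynomial `g`: it is a power of the minimal polynomial of `α ^ M`. -/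
noncomputable def powPoly (M : ℕ) (g : F[X]) : F[X] :=
  minpoly F (AdjoinRoot.root g ^ M) ^
    (g.natDegree / (minpoly F (AdjoinRoot.root g ^ M)).natDegree)

theorem charpoly_mulLeft_root_pow {g : F[X]} (hg : Irreducible g)
    [FiniteDimensional F (AdjoinRoot g)] (M : ℕ) :
    (LinearMap.mulLeft F (AdjoinRoot.root g ^ M)).charpoly = powPoly M g := by
  have : Fact (Irreducible g) := ⟨hg⟩
  have isIntegral : IsIntegral F (AdjoinRoot.root g ^ M) := Algebra.IsIntegral.isIntegral _
  have aeval_minpoly : aeval (LinearMap.mulLeft F (AdjoinRoot.root g ^ M))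
      (minpoly F (AdjoinRoot.root g ^ M)) = 0 := by
    change aeval (Algebra.lmul F (AdjoinRoot g) _) _ = 0
    rw [aeval_algHom_apply, minpoly.aeval, map_zero]
  rw [charpoly_eq_pow_of_aeval_eq_zero (minpoly.irreducible isIntegral) (minpoly.monic isIntegral)
    aeval_minpoly, powPoly]
  congr 2
  exact finrank_adjoinRoot g

theorem minpoly_root_of_monic {g : F[X]} (hm : g.Monic) : minpoly F (AdjoinRoot.root g) = g := by
  rw [AdjoinRoot.minpoly_root hm.ne_zero, hm.leadingCoeff, inv_one, C_1, mul_one]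

theorem powPoly_one {g : F[X]} (hg : Irreducible g) (hm : g.Monic) : powPoly 1 g = g := by
  rw [powPoly, pow_one, minpoly_root_of_monic hm, Nat.div_self hg.natDegree_pos, pow_one]

theorem charpoly_pow_conj_prodMap_mulLeft_root {g : F[X]} (hg : Irreducible g)
    [FiniteDimensional F (AdjoinRoot g)] {V W : Type*} [AddCommGroup V] [Module F V]
    [AddCommGroup W] [Module F W] [FiniteDimensional F W] [FiniteDimensional F V]
    (b : Module.End F W) (e : (AdjoinRoot g × W) ≃ₗ[F] V) (k : ℕ) :
    (e.conj ((LinearMap.mulLeft F (AdjoinRoot.root g)).prodMap b) ^ k).charpoly =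
      powPoly k g * (b ^ k).charpoly := by
  have conj_pow (c : Module.End F (AdjoinRoot g × W)) : e.conj c ^ k = e.conj (c ^ k) :=
    (map_pow (e.conjAlgEquiv F) c k).symm
  have prodMap_pow (c : Module.End F (AdjoinRoot g)) :
      c.prodMap b ^ k = (c ^ k).prodMap (b ^ k) :=
    (map_pow (LinearMap.prodMapRingHom F _ _) (c, b) k).symm
  rw [conj_pow, LinearEquiv.charpoly_conj, prodMap_pow, LinearMap.charpoly_prodMap,
    LinearMap.pow_mulLeft, charpoly_mulLeft_root_pow hg]

theorem exists_charpoly_pow_eq_powPoly_mul {V : Type v} [AddCommGroup V] [Module F V]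
    [FiniteDimensional F V] {a : Module.End F V} (ha : a.IsSemisimple) {g : F[X]}
    (hg : Irreducible g) (hm : g.Monic) (hd : g ∣ a.charpoly) :
    ∃ (T : Submodule F V) (b : Module.End F T) (e : (AdjoinRoot g × T) ≃ₗ[F] V),
      b.IsSemisimple ∧ a = e.conj ((LinearMap.mulLeft F (AdjoinRoot.root g)).prodMap b) ∧
      (∀ k, (a ^ k).charpoly = powPoly k g * (b ^ k).charpoly) ∧
      a.charpoly = g * b.charpoly ∧
      Module.finrank F T < Module.finrank F V := by
  have := hm.finite_adjoinRoot
  obtain ⟨T, b, e, hb, he⟩ := exists_eq_conj_prodMap_mulLeft_root ha hg hm hd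
  have charpoly_pow (k : ℕ) :
      (a ^ k).charpoly = powPoly k g * (b ^ k).charpoly := by
    nth_rw 1 [he]
    exact charpoly_pow_conj_prodMap_mulLeft_root hg _ e k
  refine ⟨T, b, e, hb, he, charpoly_pow, ?_, ?_⟩
  · simpa only [pow_one, powPoly_one hg hm] using charpoly_pow 1
  · rw [← e.finrank_eq, Module.finrank_prod, finrank_adjoinRoot]
    exact Nat.lt_add_of_pos_left hg.natDegree_pos

theorem exists_monic_irreducible_dvd_charpoly {V : Type*} [AddCommGroup V] [Module F V]
    [FiniteDimensional F V] [Nontrivial V] (a : Module.End F V) :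
    ∃ g : F[X], g.Monic ∧ Irreducible g ∧ g ∣ a.charpoly := by
  refine exists_monic_irreducible_factor _ fun hu => ?_
  have := natDegree_eq_zero_of_isUnit hu
  rw [LinearMap.charpoly_natDegree] at this
  exact (Module.finrank_pos (R := F) (M := V)).ne' this

theorem exists_eq_conj_of_charpoly_eq {V W : Type v} [AddCommGroup V] [Module F V]
    [FiniteDimensional F V] [AddCommGroup W] [Module F W] [FiniteDimensional F W]
    {a : Module.End F V} {b : Module.End F W} (ha : a.IsSemisimple) (hb : b.IsSemisimple)
    (hab : a.charpoly = b.charpoly) : ∃ e : V ≃ₗ[F] W, b = e.conj a := by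
  induction hn : Module.finrank F V using Nat.strong_induction_on generalizing V W with
  | _ n ih =>
    subst hn
    have finrank_eq : Module.finrank F V = Module.finrank F W := by
      rw [← a.charpoly_natDegree, ← b.charpoly_natDegree, hab]
    rcases subsingleton_or_nontrivial V with hV | hV
    · have : Subsingleton W := Module.finrank_zero_iff.1
        (finrank_eq.symm.trans (Module.finrank_zero_of_subsingleton (R := F)))
      exact ⟨LinearEquiv.ofFinrankEq V W finrank_eq, Subsingleton.elim _ _⟩
    obtain ⟨g, hgm, hg, hgd⟩ := exists_monic_irreducible_dvd_charpoly a
    obtain ⟨T, a₁, e, ha₁, he, -, hc, hlt⟩ := exists_charpoly_pow_eq_powPoly_mul ha hg hgm hgd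
    obtain ⟨T', b₁, e', hb₁, he', -, hc', -⟩ :=
      exists_charpoly_pow_eq_powPoly_mul hb hg hgm (hab ▸ hgd)
    have charpoly_eq : a₁.charpoly = b₁.charpoly :=
      mul_left_cancel₀ hg.ne_zero (hc.symm.trans (hab.trans hc'))
    obtain ⟨e₂, he₂⟩ := ih _ hlt ha₁ hb₁ charpoly_eq rfl
    refine ⟨e.symm.trans (((LinearEquiv.refl F _).prodCongr e₂).trans e'), ?_⟩
    ext w
    obtain ⟨x, rfl⟩ := e'.surjective w
    simp [he', he₂, he, LinearEquiv.conj_apply_apply]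

theorem exists_multiset_charpoly_pow_eq (M : ℕ) {V : Type v} [AddCommGroup V] [Module F V]
    [FiniteDimensional F V] {a : Module.End F V} (ha : a.IsSemisimple) :
    ∃ G : Multiset F[X], (∀ g ∈ G, g.Monic ∧ Irreducible g) ∧ a.charpoly = G.prod ∧
      (a ^ M).charpoly = (G.map (powPoly M)).prod := by
  induction hn : Module.finrank F V using Nat.strong_induction_on generalizing V with
  | _ n ih =>
    subst hn
    rcases subsingleton_or_nontrivial V with hV | hV
    · have charpoly_eq_one (b : Module.End F V) : b.charpoly = 1 := by
        apply b.charpoly_monic.natDegree_eq_zero.1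
        rw [LinearMap.charpoly_natDegree, Module.finrank_zero_of_subsingleton]
      exact ⟨0, by simp, charpoly_eq_one _, charpoly_eq_one _⟩
    obtain ⟨g, hgm, hg, hgd⟩ := exists_monic_irreducible_dvd_charpoly a
    obtain ⟨T, b, -, hb, -, hpow, hc, hlt⟩ := exists_charpoly_pow_eq_powPoly_mul ha hg hgm hgd
    obtain ⟨G, hG, hG1, hGM⟩ := ih _ hlt hb rfl
    refine ⟨g ::ₘ G, Multiset.forall_mem_cons.2 ⟨⟨hgm, hg⟩, hG⟩, ?_, ?_⟩
    · rw [hc, hG1, Multiset.prod_cons]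
    · rw [hpow, hGM, Multiset.map_cons, Multiset.prod_cons]

end Semisimple

/-! ### The conjugate-reciprocal of a polynomial -/

section Tilde

variable {F : Type*} [Field F] (σ : F →+* F) {f g : F[X]}

theorem natTrailingDegree_map_eq_zero (h0 : f.coeff 0 ≠ 0) : (f.map σ).natTrailingDegree = 0 :=
  natTrailingDegree_eq_zero.2 (Or.inr (by simpa using h0))

theorem natDegree_tildePoly (h0 : f.coeff 0 ≠ 0) : (tildePoly σ f).natDegree = f.natDegree := by
  rw [tildePoly, natDegree_C_mul (inv_ne_zero (by simpa using h0)), reverse_natDegree,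
    natTrailingDegree_map_eq_zero σ h0, natDegree_map, Nat.sub_zero]

theorem monic_tildePoly (h0 : f.coeff 0 ≠ 0) : (tildePoly σ f).Monic := by
  rw [Monic, tildePoly, leadingCoeff_mul, leadingCoeff_C, reverse_leadingCoeff, trailingCoeff,
    natTrailingDegree_map_eq_zero σ h0, coeff_map]
  exact inv_mul_cancel₀ (by simpa using h0)

theorem coeff_zero_tildePoly (hm : f.Monic) : (tildePoly σ f).coeff 0 = (σ (f.coeff 0))⁻¹ := by
  rw [tildePoly, coeff_C_mul, coeff_zero_reverse, leadingCoeff_map, hm.leadingCoeff, map_one,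
    mul_one]

theorem coeff_zero_tildePoly_ne_zero (hm : f.Monic) (h0 : f.coeff 0 ≠ 0) :
    (tildePoly σ f).coeff 0 ≠ 0 := by
  rw [coeff_zero_tildePoly σ hm]
  exact inv_ne_zero (by simpa using h0)

theorem tildePoly_mul (f g : F[X]) : tildePoly σ (f * g) = tildePoly σ f * tildePoly σ g := by
  rw [tildePoly, tildePoly, tildePoly, mul_coeff_zero, map_mul, mul_inv, C_mul, Polynomial.map_mul,
    reverse_mul_of_domain]
  ring

theorem tildePoly_one : tildePoly σ (1 : F[X]) = 1 := by
  rw [tildePoly, Polynomial.map_one, coeff_one_zero, map_one, inv_one, C_1, one_mul, ← C_1,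
    reverse_C]

theorem tildePoly_pow (f : F[X]) (k : ℕ) : tildePoly σ (f ^ k) = tildePoly σ f ^ k := by
  induction k with
  | zero => rw [pow_zero, pow_zero, tildePoly_one]
  | succ k ih => rw [pow_succ, pow_succ, tildePoly_mul, ih]

theorem tildePoly_dvd_tildePoly (h : f ∣ g) : tildePoly σ f ∣ tildePoly σ g := by
  obtain ⟨k, rfl⟩ := h
  rw [tildePoly_mul]
  exact dvd_mul_right _ _

theorem reflect_mul_expand (M : ℕ) {N : ℕ} (hf : f.natDegree ≤ N) :
    reflect (N * M) (expand F M f) = expand F M (reflect N f) := by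
  refine induction_with_natDegree_le
    (fun f => reflect (N * M) (expand F M f) = expand F M (reflect N f)) N (by simp)
    (fun n r _ hn => ?_) (fun f g _ _ hf hg => ?_) f hf
  · have hnM : n * M ≤ N * M := Nat.mul_le_mul_right M hn
    simp only [reflect_C_mul_X_pow, map_mul, expand_C, map_pow, expand_X, ← pow_mul, mul_comm M,
      revAt_le hn, revAt_le hnM, Nat.sub_mul]
  · rw [map_add, reflect_add, reflect_add, map_add, hf, hg]

theorem expand_reverse (M : ℕ) (f : F[X]) : expand F M f.reverse = (expand F M f).reverse := by
  rw [reverse, reverse, natDegree_expand, reflect_mul_expand M le_rfl]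

theorem tildePoly_comp_X_pow {M : ℕ} (hM : 0 < M) (f : F[X]) :
    tildePoly σ (f.comp (X ^ M)) = (tildePoly σ f).comp (X ^ M) := by
  rw [← expand_eq_comp_X_pow, ← expand_eq_comp_X_pow, tildePoly, tildePoly, map_mul, expand_C,
    map_expand, expand_reverse, coeff_expand hM, if_pos (dvd_zero M), Nat.zero_div]

variable {σ}

theorem tildePoly_tildePoly (hσ : Function.Involutive σ) (hm : f.Monic) (h0 : f.coeff 0 ≠ 0) :
    tildePoly σ (tildePoly σ f) = f := by
  have σ_comp_σ : σ.comp σ = RingHom.id F := RingHom.ext hσ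
  rw [tildePoly, coeff_zero_tildePoly σ hm, reverse, natDegree_map, natDegree_tildePoly σ h0,
    reflect_map, tildePoly, reflect_C_mul, reverse, natDegree_map, reflect_reflect,
    Polynomial.map_mul, map_C, Polynomial.map_map, ← mul_assoc, ← C_mul, map_inv₀, inv_inv,
    mul_inv_cancel₀ (by simpa using h0), C_1, one_mul, σ_comp_σ, Polynomial.map_id]

theorem irreducible_tildePoly (hσ : Function.Involutive σ) (hm : f.Monic) (h0 : f.coeff 0 ≠ 0)
    (hf : Irreducible f) : Irreducible (tildePoly σ f) := by
  rw [(monic_tildePoly σ h0).irreducible_iff_natDegree]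
  refine ⟨fun h1 => ?_, fun a b _ _ hab => ?_⟩
  · have := natDegree_tildePoly σ h0
    rw [h1, natDegree_one] at this
    exact hf.natDegree_pos.ne this
  · have coeff_zero := coeff_zero_tildePoly_ne_zero σ hm h0
    rw [← hab, mul_coeff_zero] at coeff_zero
    have ha0 := left_ne_zero_of_mul coeff_zero
    have hb0 := right_ne_zero_of_mul coeff_zero
    rw [← natDegree_tildePoly σ ha0, ← natDegree_tildePoly σ hb0]
    exact (hm.irreducible_iff_natDegree.1 hf).2 _ _ (monic_tildePoly σ ha0)
      (monic_tildePoly σ hb0) (by rw [← tildePoly_mul, hab, tildePoly_tildePoly hσ hm h0])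

theorem aeval_inv_tildePoly {E : Type*} [Field E] [Algebra F E] {τ : E →+* E}
    (hτ : ∀ a, τ (algebraMap F E a) = algebraMap F E (σ a)) {x : E} (hx : x ≠ 0)
    (h : aeval x f = 0) : aeval (τ x)⁻¹ (tildePoly σ f) = 0 := by
  let : Invertible (τ x) := invertibleOfNonzero (by simpa using hx)
  have eval₂_map_eq_zero : eval₂ (algebraMap F E) (τ x) (f.map σ) = 0 := by
    have comp_eq : (algebraMap F E).comp σ = τ.comp (algebraMap F E) :=
      RingHom.ext fun a => (hτ a).symm
    rw [eval₂_map, comp_eq, ← hom_eval₂, ← aeval_def, h, map_zero]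
  rw [tildePoly, map_mul, aeval_def (τ x)⁻¹ (reverse _), ← invOf_eq_inv,
    (eval₂_reverse_eq_zero_iff _ _ _).2 eval₂_map_eq_zero, mul_zero]

section Matrix

variable {ι : Type*} [Fintype ι] [DecidableEq ι] {A J : Matrix ι ι F}

theorem charpoly_inv_eq (hA : IsUnit A) :
    A⁻¹.charpoly = C (A.charpoly.coeff 0)⁻¹ * A.charpoly.reverse := by
  have neg_one_pow : (-1 : F[X]) ^ Fintype.card ι = C ((-1 : F) ^ Fintype.card ι) := by simp
  rw [Matrix.charpoly_inv A hA, Matrix.reverse_charpoly, Matrix.det_eq_sign_charpoly_coeff,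
    Ring.inverse_eq_inv', mul_inv, C_mul, ← mul_assoc, neg_one_pow, ← C_mul,
    mul_inv_cancel₀ (pow_ne_zero _ (by simp)), C_1, one_mul]

theorem charpoly_coeff_zero_ne_zero (hA : IsUnit A) : A.charpoly.coeff 0 ≠ 0 := by
  have h := ((Matrix.isUnit_iff_isUnit_det A).1 hA).ne_zero
  rw [Matrix.det_eq_sign_charpoly_coeff] at h
  exact right_ne_zero_of_mul h

theorem isUnit_transpose_map (σ : F →+* F) (hA : IsUnit A) : IsUnit (A.map σ)ᵀ := by
  rw [Matrix.isUnit_transpose]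
  exact hA.map σ.mapMatrix

theorem charpoly_inv_transpose_map (σ : F →+* F) (hA : IsUnit A) :
    ((A.map σ)ᵀ)⁻¹.charpoly = tildePoly σ A.charpoly := by
  rw [charpoly_inv_eq (isUnit_transpose_map σ hA), Matrix.charpoly_transpose, Matrix.charpoly_map,
    tildePoly, coeff_map]

theorem tildePoly_charpoly_of_mul_mul_transpose_map_eq (hA : IsUnit A) (hJ : IsUnit J)
    (h : A * J * (A.map σ)ᵀ = J) : tildePoly σ A.charpoly = A.charpoly := by
  have isUnit_det := (Matrix.isUnit_iff_isUnit_det _).1 (isUnit_transpose_map σ hA)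
  obtain ⟨u, rfl⟩ := hJ
  have mul_u : A * u = u * ((A.map σ)ᵀ)⁻¹ := by
    nth_rw 2 [← h]
    rw [Matrix.mul_nonsing_inv_cancel_right _ _ isUnit_det]
  have conj_eq : A = u.val * ((A.map σ)ᵀ)⁻¹ * u⁻¹.val := by
    rw [← mul_u, Matrix.mul_assoc, Units.mul_inv, Matrix.mul_one]
  rw [← charpoly_inv_transpose_map σ hA]
  nth_rw 2 [conj_eq]
  rw [Matrix.coe_units_inv, Matrix.charpoly_units_conj]

end Matrix

end Tilde

/-! ### The substitution `x ↦ x ^ M` -/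

section Substitution

variable {F : Type*} [Field F] {f g : F[X]} {M : ℕ}

theorem coeff_zero_ne_zero_of_dvd (h : f ∣ g) (hg : g.coeff 0 ≠ 0) : f.coeff 0 ≠ 0 := by
  obtain ⟨k, rfl⟩ := h
  rw [mul_coeff_zero] at hg
  exact left_ne_zero_of_mul hg

theorem coeff_zero_comp_X_pow (hM : 0 < M) (f : F[X]) :
    (f.comp (X ^ M)).coeff 0 = f.coeff 0 := by
  rw [← expand_eq_comp_X_pow, coeff_expand hM, if_pos (dvd_zero M), Nat.zero_div]

theorem monic_comp_X_pow (hM : 0 < M) (hf : f.Monic) : (f.comp (X ^ M)).Monic := by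
  rw [← expand_eq_comp_X_pow]
  exact hf.expand hM

theorem natDegree_comp_X_pow (M : ℕ) (f : F[X]) :
    (f.comp (X ^ M)).natDegree = f.natDegree * M := by
  rw [← expand_eq_comp_X_pow, natDegree_expand]

theorem dvd_comp_X_pow_iff : g ∣ f.comp (X ^ M) ↔ aeval (AdjoinRoot.root g ^ M) f = 0 := by
  rw [← AdjoinRoot.mk_eq_zero, ← AdjoinRoot.aeval_eq, aeval_comp, map_pow, aeval_X]

theorem minpoly_root_pow_eq (hg : Irreducible g) (hf : Irreducible f) (hm : f.Monic)
    (h : g ∣ f.comp (X ^ M)) : minpoly F (AdjoinRoot.root g ^ M) = f := by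
  have : Fact (Irreducible g) := ⟨hg⟩
  exact (minpoly.eq_of_irreducible_of_monic hf (dvd_comp_X_pow_iff.1 h) hm).symm

theorem natDegree_minpoly_pow_dvd {E : Type*} [Field E] [Algebra F E] [FiniteDimensional F E]
    (y : E) (M : ℕ) : (minpoly F (y ^ M)).natDegree ∣ (minpoly F y).natDegree := by
  have degree_dvd := minpoly.degree_dvd (K := F)
    (x := IntermediateField.AdjoinSimple.gen F y ^ M) (Algebra.IsIntegral.isIntegral _)
  rwa [IntermediateField.adjoin.finrank (Algebra.IsIntegral.isIntegral y), ←
    minpoly.algebraMap_eq (algebraMap (IntermediateField.adjoin F {y}) E).injective, map_pow,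
    IntermediateField.AdjoinSimple.algebraMap_gen] at degree_dvd

theorem natDegree_dvd_of_dvd_comp_X_pow (hg : Irreducible g) (hgm : g.Monic)
    (hf : Irreducible f) (hm : f.Monic) (h : g ∣ f.comp (X ^ M)) :
    f.natDegree ∣ g.natDegree := by
  have : Fact (Irreducible g) := ⟨hg⟩
  have := hgm.finite_adjoinRoot
  have degree_dvd := natDegree_minpoly_pow_dvd (F := F) (AdjoinRoot.root g) M
  rwa [minpoly_root_pow_eq hg hf hm h, minpoly_root_of_monic hgm] at degree_dvd

section RootPower

variable [Fact (Irreducible f)] {y : AdjoinRoot f}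

theorem natDegree_minpoly_of_pow_eq_root (hm : f.Monic) (hy : y ^ M = AdjoinRoot.root f) :
    (minpoly F y).natDegree = f.natDegree := by
  have := hm.finite_adjoinRoot
  have isIntegral : IsIntegral F y := Algebra.IsIntegral.isIntegral y
  have dvd := natDegree_minpoly_pow_dvd (F := F) y M
  rw [hy, minpoly_root_of_monic hm] at dvd
  exact le_antisymm
    ((minpoly.natDegree_le (A := F) y).trans_eq (finrank_adjoinRoot f))
    (Nat.le_of_dvd (minpoly.natDegree_pos isIntegral) dvd)

theorem minpoly_dvd_comp_X_pow_of_pow_eq_root (hy : y ^ M = AdjoinRoot.root f) :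
    minpoly F y ∣ f.comp (X ^ M) := by
  apply minpoly.dvd
  rw [aeval_comp, map_pow, aeval_X, hy, AdjoinRoot.aeval_eq, AdjoinRoot.mk_self]

end RootPower

theorem irreducible_comp_X_pow_or_exists_pow_eq_root (hf : Irreducible f) (hm : f.Monic)
    (hM : M.Prime) :
    Irreducible (f.comp (X ^ M)) ∨ ∃ y : AdjoinRoot f, y ^ M = AdjoinRoot.root f := by
  refine or_iff_not_imp_right.2 fun h => irreducible_comp hm (monic_X_pow M) hf fun E _ _ x hx => ?_
  have isIntegral : IsIntegral F x := by
    by_contra hni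
    exact hf.ne_zero (hx.symm.trans (minpoly.eq_zero hni))
  rw [Polynomial.map_pow, map_X]
  refine X_pow_sub_C_irreducible_of_prime hM fun b hb => ?_
  subst hx
  refine h ⟨(IntermediateField.adjoinRootEquivAdjoin F isIntegral).symm b, ?_⟩
  rw [← map_pow, hb, AlgEquiv.symm_apply_eq, IntermediateField.adjoinRootEquivAdjoin_apply_root]

theorem irreducible_comp_X_pow_or_exists_factor (hf : Irreducible f) (hm : f.Monic)
    (hM : M.Prime) :
    Irreducible (f.comp (X ^ M)) ∨
      ∃ g : F[X], g.Monic ∧ Irreducible g ∧ g.natDegree = f.natDegree ∧ g ∣ f.comp (X ^ M) := by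
  refine (irreducible_comp_X_pow_or_exists_pow_eq_root hf hm hM).imp_right fun ⟨y, hy⟩ => ?_
  have : Fact (Irreducible f) := ⟨hf⟩
  have := hm.finite_adjoinRoot
  have isIntegral : IsIntegral F y := Algebra.IsIntegral.isIntegral y
  exact ⟨minpoly F y, minpoly.monic isIntegral, minpoly.irreducible isIntegral,
    natDegree_minpoly_of_pow_eq_root hm hy, minpoly_dvd_comp_X_pow_of_pow_eq_root hy⟩

theorem adjoinRoot_root_ne_zero [Fact (Irreducible f)] (h0 : f.coeff 0 ≠ 0) :
    AdjoinRoot.root f ≠ 0 := by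
  intro root_eq_zero
  have eval₂_root := AdjoinRoot.eval₂_root f
  rw [root_eq_zero, eval₂_at_zero] at eval₂_root
  exact h0 (by simpa using eval₂_root)

end Substitution

/-! ### Self-conjugate irreducible polynomials -/

section SCIM

variable {F : Type*} [Field F] {σ : F →+* F} {f : F[X]}

theorem IsSCIM.exists_conj (hσ : Function.Involutive σ) [Fact (Irreducible f)]
    (hf : IsSCIM σ f) :
    ∃ τ : AdjoinRoot f →+* AdjoinRoot f,
      (∀ a, τ (algebraMap F _ a) = algebraMap F _ (σ a)) ∧
      τ (AdjoinRoot.root f) = (AdjoinRoot.root f)⁻¹ ∧ Function.Involutive τ := by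
  obtain ⟨-, -, h0, htilde⟩ := hf
  let : Invertible (AdjoinRoot.root f)⁻¹ :=
    invertibleOfNonzero (inv_ne_zero (adjoinRoot_root_ne_zero h0))
  have eval₂_inv_root : f.eval₂ ((AdjoinRoot.of f).comp σ) (AdjoinRoot.root f)⁻¹ = 0 := by
    have eval₂_tilde : eval₂ (AdjoinRoot.of f) (AdjoinRoot.root f) (tildePoly σ f) = 0 := by
      rw [htilde, AdjoinRoot.eval₂_root]
    rw [tildePoly, eval₂_mul, eval₂_C] at eval₂_tilde
    rw [← eval₂_map, ← eval₂_reverse_eq_zero_iff, invOf_eq_inv, inv_inv]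
    exact (mul_eq_zero.1 eval₂_tilde).resolve_left (by simpa using h0)
  refine ⟨AdjoinRoot.lift _ _ eval₂_inv_root, fun a => ?_, AdjoinRoot.lift_root _, ?_⟩
  · rw [AdjoinRoot.algebraMap_eq, AdjoinRoot.lift_of, RingHom.comp_apply]
  · have comp_self : (AdjoinRoot.lift _ _ eval₂_inv_root).comp
        (AdjoinRoot.lift _ _ eval₂_inv_root) = RingHom.id _ :=
      AdjoinRoot.ringHom_ext (RingHom.ext fun a => by simp [hσ a]) (by simp)
    exact fun x => RingHom.congr_fun comp_self x

theorem isSCIM_minpoly {E : Type*} [Field E] [Algebra F E] [FiniteDimensional F E] {τ : E →+* E}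
    (hτ : ∀ a, τ (algebraMap F E a) = algebraMap F E (σ a)) {y : E} (hy : y * τ y = 1) :
    IsSCIM σ (minpoly F y) := by
  have isIntegral : IsIntegral F y := Algebra.IsIntegral.isIntegral y
  have hy0 : y ≠ 0 := left_ne_zero_of_mul_eq_one hy
  have h0 : (minpoly F y).coeff 0 ≠ 0 := minpoly.coeff_zero_ne_zero isIntegral hy0
  have aeval_tilde := aeval_inv_tildePoly hτ hy0 (minpoly.aeval F y)
  rw [inv_eq_of_mul_eq_one_left hy] at aeval_tilde
  exact ⟨minpoly.monic isIntegral, minpoly.irreducible isIntegral, h0,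
    eq_of_monic_of_dvd_of_natDegree_le (minpoly.monic isIntegral) (monic_tildePoly σ h0)
      (minpoly.dvd F y aeval_tilde) (natDegree_tildePoly σ h0).le⟩

-- The norm `η = y * τ y` satisfies `η ^ M = 1` and `τ η = η`, so for `M = 2k + 1` the factor
-- `η ^ k` corrects `y` to an `M`-th root of `x` of norm one.
theorem exists_pow_eq_and_mul_conj_eq_one {M : ℕ} {E : Type*} [CommRing E] {τ : E →+* E}
    (hτ : Function.Involutive τ) (hM : Odd M) {x y : E} (hx : x * τ x = 1) (hy : y ^ M = x) :
    ∃ z, z ^ M = x ∧ z * τ z = 1 := by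
  obtain ⟨k, rfl⟩ := hM
  have norm_pow : (y * τ y) ^ (2 * k + 1) = 1 := by rw [mul_pow, ← map_pow, hy, hx]
  refine ⟨y * (y * τ y) ^ k, ?_, ?_⟩
  · rw [mul_pow, hy, ← pow_mul, mul_comm k, pow_mul, norm_pow, one_pow, mul_one]
  · calc y * (y * τ y) ^ k * τ (y * (y * τ y) ^ k) = (y * τ y) ^ (2 * k + 1) := by
          rw [map_mul, map_pow, map_mul, hτ]; ring
      _ = 1 := norm_pow

theorem IsSCIM.irreducible_comp_X_pow (hσ : Function.Involutive σ) (hf : IsSCIM σ f) {M : ℕ}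
    (hM : M.Prime) (hM2 : M ≠ 2) (hn : ¬ IsMtildePowerPoly σ M f) :
    Irreducible (f.comp (X ^ M)) := by
  refine (irreducible_comp_X_pow_or_exists_pow_eq_root hf.2.1 hf.1 hM).resolve_right ?_
  rintro ⟨y, hy⟩
  have : Fact (Irreducible f) := ⟨hf.2.1⟩
  have := hf.1.finite_adjoinRoot
  obtain ⟨τ, hτ, τ_root, τ_invol⟩ := hf.exists_conj hσ
  have root_norm : AdjoinRoot.root f * τ (AdjoinRoot.root f) = 1 := by
    rw [τ_root, mul_inv_cancel₀ (adjoinRoot_root_ne_zero hf.2.2.1)]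
  obtain ⟨z, z_pow, z_norm⟩ :=
    exists_pow_eq_and_mul_conj_eq_one τ_invol (hM.odd_of_ne_two hM2) root_norm hy
  exact hn ⟨hf, minpoly F z, isSCIM_minpoly hτ z_norm, natDegree_minpoly_of_pow_eq_root hf.1 z_pow,
    minpoly_dvd_comp_X_pow_of_pow_eq_root z_pow⟩

-- A square root of the Frobenius in the cyclic group it generates forces the order to be odd.
theorem odd_finrank_of_sq_eq_frobeniusAlgHom (F : Type*) [Field F] [Fintype F] (E : Type*)
    [Field E] [Algebra F E] [Finite E] {ψ : E →ₐ[F] E}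
    (hψ : ψ ^ 2 = FiniteField.frobeniusAlgHom F E) : Odd (Module.finrank F E) := by
  have : FiniteDimensional F E := Module.Finite.of_finite
  obtain ⟨i, hi⟩ := (FiniteField.bijective_frobeniusAlgHom_pow F E).2 ψ
  replace hi : FiniteField.frobeniusAlgHom F E ^ (i : ℕ) = ψ := hi
  have isOfFinOrder : IsOfFinOrder (FiniteField.frobeniusAlgHom F E) := by
    rw [← orderOf_pos_iff, FiniteField.orderOf_frobeniusAlgHom]
    exact Module.finrank_pos
  have modEq : (i : ℕ) * 2 ≡ 1 [MOD orderOf (FiniteField.frobeniusAlgHom F E)] :=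
    isOfFinOrder.pow_eq_pow_iff_modEq.1 (by rw [pow_mul, hi, hψ, pow_one])
  rw [FiniteField.orderOf_frobeniusAlgHom] at modEq
  refine Nat.not_even_iff_odd.1 fun even => ?_
  simpa [Nat.ModEq, Nat.mul_mod_left] using modEq.of_dvd even.two_dvd

theorem IsSCIM.odd_natDegree [Fintype F] {p ℓ : ℕ} [Fact p.Prime] [CharP F p]
    (hF : Fintype.card F = (p ^ ℓ) ^ 2) (hσp : ∀ x : F, σ x = x ^ p ^ ℓ)
    (hσ : Function.Involutive σ) (hf : IsSCIM σ f) : Odd f.natDegree := by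
  have : Fact (Irreducible f) := ⟨hf.2.1⟩
  have := hf.1.finite_adjoinRoot
  have : Finite (AdjoinRoot f) := Module.finite_of_finite F
  have : CharP (AdjoinRoot f) p := charP_of_injective_algebraMap (algebraMap F _).injective p
  obtain ⟨τ, hτ, -, τ_invol⟩ := hf.exists_conj hσ
  let ψ : AdjoinRoot f →ₐ[F] AdjoinRoot f :=
    { τ.comp (iterateFrobenius (AdjoinRoot f) p ℓ) with
      commutes' := fun a => by
        change τ (iterateFrobenius (AdjoinRoot f) p ℓ (algebraMap F _ a)) = algebraMap F _ a
        rw [iterateFrobenius_def, ← map_pow, ← hσp, hτ, hσ] }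
  have ψ_apply (x : AdjoinRoot f) : ψ x = τ (x ^ p ^ ℓ) :=
    congrArg τ (iterateFrobenius_def p ℓ x)
  have ψ_sq : ψ ^ 2 = FiniteField.frobeniusAlgHom F (AdjoinRoot f) := by
    refine AlgHom.ext fun x => ?_
    rw [pow_two, AlgHom.mul_apply, ψ_apply, ψ_apply, map_pow, map_pow, map_pow, τ_invol, ← pow_mul,
      FiniteField.frobeniusAlgHom_apply, hF, sq]
  rw [← finrank_adjoinRoot f]
  exact odd_finrank_of_sq_eq_frobeniusAlgHom F (AdjoinRoot f) ψ_sq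

end SCIM

/-! ### Elements of order prime to the characteristic -/

/-- `a` has finite order not divisible by the characteristic of `F`. Among the elements of finite
order of an `F`-algebra this singles out those with squarefree minimal polynomial. -/
def HasTameOrder (F : Type*) [Semiring F] {R : Type*} [Monoid R] (a : R) : Prop :=
  ∃ N : ℕ, (N : F) ≠ 0 ∧ a ^ N = 1

namespace HasTameOrder

section Monoid

variable {F : Type*} [Semiring F] {R S : Type*} [Monoid R] [Monoid S] {a : R}

theorem isUnit (h : HasTameOrder F a) : IsUnit a := by
  obtain ⟨N, hN, ha⟩ := h
  exact IsUnit.of_pow_eq_one ha (by rintro rfl; exact hN Nat.cast_zero)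

theorem map {Φ : Type*} [FunLike Φ R S] [MonoidHomClass Φ R S] (φ : Φ) (h : HasTameOrder F a) :
    HasTameOrder F (φ a) := by
  obtain ⟨N, hN, ha⟩ := h
  exact ⟨N, hN, by rw [← map_pow, ha, map_one]⟩

theorem pow (h : HasTameOrder F a) (M : ℕ) : HasTameOrder F (a ^ M) := by
  obtain ⟨N, hN, ha⟩ := h
  exact ⟨N, hN, by rw [← pow_mul, mul_comm, pow_mul, ha, one_pow]⟩

theorem of_pow [NoZeroDivisors F] {M : ℕ} (hM : (M : F) ≠ 0) (h : HasTameOrder F (a ^ M)) :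
    HasTameOrder F a := by
  obtain ⟨N, hN, ha⟩ := h
  exact ⟨M * N, by rw [Nat.cast_mul]; exact mul_ne_zero hM hN, by rw [pow_mul, ha]⟩

end Monoid

section Field

variable {F : Type*} [Field F]

theorem squarefree_minpoly {R : Type*} [Ring R] [Algebra F R] {a : R} (h : HasTameOrder F a) :
    Squarefree (minpoly F a) := by
  obtain ⟨N, hN, ha⟩ := h
  exact (X_pow_sub_one_separable_iff.2 hN).squarefree.squarefree_of_dvd
    (minpoly.dvd F a (by simp [ha]))

theorem isSemisimple {V : Type*} [AddCommGroup V] [Module F V] {a : Module.End F V}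
    (h : HasTameOrder F a) : a.IsSemisimple :=
  Module.End.isSemisimple_of_squarefree_aeval_eq_zero h.squarefree_minpoly (minpoly.aeval F a)

theorem of_squarefree_minpoly {R : Type*} [Ring R] [Algebra F R] {a : R} (ha : IsOfFinOrder a)
    (hs : Squarefree (minpoly F a)) : HasTameOrder F a := by
  obtain ⟨p, hp⟩ := ExpChar.exists F
  cases hp with
  | zero => exact ⟨orderOf a, Nat.cast_ne_zero.2 ha.orderOf_pos.ne', pow_orderOf_eq_one a⟩
  | prime hp =>
    have : Fact p.Prime := ⟨hp⟩
    obtain ⟨k, N, hN, orderOf_eq⟩ :=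
      Nat.exists_eq_pow_mul_and_not_dvd ha.orderOf_pos.ne' p hp.ne_one
    have minpoly_dvd_pow : minpoly F a ∣ (X ^ N - 1) ^ p ^ k := by
      apply minpoly.dvd
      rw [sub_pow_char_pow, ← pow_mul, one_pow, mul_comm, ← orderOf_eq, map_sub, map_pow, aeval_X,
        pow_orderOf_eq_one, map_one, sub_self]
    have aeval_eq_zero := aeval_eq_zero_of_dvd_aeval_eq_zero
      ((hs.dvd_pow_iff_dvd (pow_ne_zero _ hp.ne_zero)).1 minpoly_dvd_pow) (minpoly.aeval F a)
    rw [map_sub, map_pow, aeval_X, map_one, sub_eq_zero] at aeval_eq_zero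
    exact ⟨N, by rwa [Ne, CharP.cast_eq_zero_iff F p], aeval_eq_zero⟩

theorem of_ne_zero (F : Type*) [Field F] {E : Type*} [Field E] [Finite E] [Algebra F E] {x : E}
    (hx : x ≠ 0) : HasTameOrder F x := by
  have := Fintype.ofFinite E
  refine ⟨Fintype.card E - 1, fun h => ?_, FiniteField.pow_card_sub_one_eq_one x hx⟩
  replace h := congrArg (algebraMap F E) h
  rw [map_natCast, Nat.cast_sub Fintype.card_pos, map_zero, FiniteField.cast_card_eq_zero] at h
  simp at h

end Field

section Matrix

variable {F : Type*} [Field F] {ι κ : Type*} [Fintype ι] [DecidableEq ι] [Fintype κ]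
  [DecidableEq κ] {A : Matrix ι ι F} {B : Matrix κ κ F}

theorem transpose (h : HasTameOrder F A) : HasTameOrder F Aᵀ := by
  obtain ⟨N, hN, hA⟩ := h
  exact ⟨N, hN, by rw [← transpose_pow, hA, transpose_one]⟩

theorem inv (h : HasTameOrder F A) : HasTameOrder F A⁻¹ := by
  obtain ⟨N, hN, hA⟩ := h
  exact ⟨N, hN, by rw [inv_pow', hA, inv_one]⟩

theorem fromBlocks (hA : HasTameOrder F A) (hB : HasTameOrder F B) :
    HasTameOrder F (fromBlocks A 0 0 B) := by
  obtain ⟨N, hN, hA⟩ := hA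
  obtain ⟨K, hK, hB⟩ := hB
  refine ⟨N * K, by rw [Nat.cast_mul]; exact mul_ne_zero hN hK, ?_⟩
  rw [fromBlocks_diagonal_pow, pow_mul, hA, one_pow, mul_comm, pow_mul, hB, one_pow,
    fromBlocks_one]

end Matrix

end HasTameOrder

/-! ### Hermitian trace forms -/

section TraceForm

variable {F : Type*} [Field F] {σ : F →+* F} {E : Type*} [Field E] [Algebra F E] {τ : E →+* E}
  {ι : Type*} (b : Module.Basis ι F E)

/-- The Gram matrix in the basis `b` of the sesquilinear form `(x, y) ↦ Tr (x * τ y)`. -/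
noncomputable def traceFormMatrix (τ : E →+* E) : Matrix ι ι F :=
  Matrix.of fun i j => Algebra.trace F E (b i * τ (b j))

theorem map_trace_eq_trace_map (hσ : Function.Involutive σ) (hτ : Function.Involutive τ)
    (hτσ : ∀ a, τ (algebraMap F E a) = algebraMap F E (σ a)) (x : E) :
    σ (Algebra.trace F E x) = Algebra.trace F E (τ x) := by
  let eσ : F ≃+* F := RingEquiv.ofRingHom σ σ (RingHom.ext hσ) (RingHom.ext hσ)
  let eτ : E ≃+* E := RingEquiv.ofRingHom τ τ (RingHom.ext hτ) (RingHom.ext hτ)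
  have trace_eq := Algebra.trace_eq_of_equiv_equiv eσ eτ (RingHom.ext fun a => (hτσ a).symm) x
  exact ((RingEquiv.eq_symm_apply _).1 trace_eq)

theorem transpose_map_traceFormMatrix (hσ : Function.Involutive σ) (hτ : Function.Involutive τ)
    (hτσ : ∀ a, τ (algebraMap F E a) = algebraMap F E (σ a)) :
    ((traceFormMatrix b τ).map σ)ᵀ = traceFormMatrix b τ := by
  ext i j
  rw [transpose_apply, map_apply, traceFormMatrix, of_apply, of_apply,
    map_trace_eq_trace_map hσ hτ hτσ, map_mul, hτ, mul_comm]

theorem map_smul_of_map_algebraMap (hτσ : ∀ a, τ (algebraMap F E a) = algebraMap F E (σ a))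
    (a : F) (x : E) : τ (a • x) = σ a • τ x := by
  rw [Algebra.smul_def, map_mul, hτσ, ← Algebra.smul_def]

variable [Fintype ι]

theorem isUnit_traceFormMatrix [DecidableEq ι] [FiniteDimensional F E] [Algebra.IsSeparable F E]
    (hσ : Function.Involutive σ) (hτσ : ∀ a, τ (algebraMap F E a) = algebraMap F E (σ a)) :
    IsUnit (traceFormMatrix b τ) := by
  rw [isUnit_iff_isUnit_det, isUnit_iff_ne_zero]
  intro det_eq_zero
  obtain ⟨v, v_ne, mulVec_eq⟩ := exists_mulVec_eq_zero_iff.2 det_eq_zero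
  have τ_sum : τ (∑ j, σ (v j) • b j) = ∑ j, v j • τ (b j) := by
    simp only [map_sum, map_smul_of_map_algebraMap hτσ, hσ (v _)]
  have trace_eq_zero : (Algebra.traceForm F E).flip (τ (∑ j, σ (v j) • b j)) = 0 := by
    refine b.ext fun i => ?_
    calc Algebra.trace F E (b i * τ (∑ j, σ (v j) • b j)) = (traceFormMatrix b τ *ᵥ v) i := by
          simp only [τ_sum, Finset.mul_sum, map_sum, mul_smul_comm, map_smul, smul_eq_mul,
            mulVec, dotProduct, traceFormMatrix, of_apply, mul_comm (v _)]
      _ = 0 := congrFun mulVec_eq i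
  have τ_eq_zero : τ (∑ j, σ (v j) • b j) = 0 :=
    (traceForm_nondegenerate F E).2 _ fun x => LinearMap.congr_fun trace_eq_zero x
  have coeff_eq_zero := Fintype.linearIndependent_iff.1 b.linearIndependent _
    ((map_eq_zero τ).1 τ_eq_zero)
  exact v_ne (funext fun j => (map_eq_zero σ).1 (coeff_eq_zero j))

theorem leftMulMatrix_mul_traceFormMatrix_mul [DecidableEq ι]
    (hτσ : ∀ a, τ (algebraMap F E a) = algebraMap F E (σ a)) {r : E} (hr : r * τ r = 1) :
    (Algebra.leftMulMatrix b r)ᵀ * traceFormMatrix b τ *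
      ((Algebra.leftMulMatrix b r)ᵀ.map σ)ᵀ = traceFormMatrix b τ := by
  set A := (Algebra.leftMulMatrix b r)ᵀ with hA
  have sum_smul (i : ι) : ∑ k, A i k • b k = r * b i := by
    simp only [hA, transpose_apply, Algebra.leftMulMatrix_eq_repr_mul, b.sum_repr]
  ext i j
  have entry_eq : (A * traceFormMatrix b τ * (A.map σ)ᵀ) i j =
      Algebra.trace F E ((∑ k, A i k • b k) * τ (∑ l, A j l • b l)) := by
    simp only [mul_apply, transpose_apply, map_apply, map_sum, map_smul_of_map_algebraMap hτσ,
      Finset.sum_mul, Finset.mul_sum, traceFormMatrix, of_apply]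
    refine Finset.sum_congr rfl fun l _ => Finset.sum_congr rfl fun k _ => ?_
    rw [smul_mul_smul_comm, map_smul, smul_eq_mul]
    ring
  rw [entry_eq, sum_smul, sum_smul, map_mul τ, mul_mul_mul_comm, hr, one_mul, traceFormMatrix,
    of_apply]

end TraceForm

/-! ### Isometries of hermitian forms of order prime to the characteristic -/

section Isometries

variable {F : Type*} [Field F]

/-- `c` is the characteristic polynomial of the `M`-th power of an isometry, of order prime to the
characteristic, of some nondegenerate `σ`-hermitian form. -/
def IsIsometryPowerCharpoly (σ : F →+* F) (M : ℕ) (c : F[X]) : Prop :=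
  ∃ (n : ℕ) (A J : Matrix (Fin n) (Fin n) F), HasTameOrder F A ∧ IsUnit J ∧ (J.map σ)ᵀ = J ∧
    A * J * (A.map σ)ᵀ = J ∧ (A ^ M).charpoly = c

variable {σ : F →+* F} {M : ℕ}

section FiniteIndex

variable {ι : Type*} [Fintype ι] [DecidableEq ι] {A J : Matrix ι ι F}

theorem isIsometryPowerCharpoly_charpoly_pow (M : ℕ) (hA : HasTameOrder F A) (hJ : IsUnit J)
    (hs : (J.map σ)ᵀ = J) (h : A * J * (A.map σ)ᵀ = J) :
    IsIsometryPowerCharpoly σ M (A ^ M).charpoly := by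
  let e := Fintype.equivFin ι
  let r := reindexAlgEquiv F F e
  have transpose_map_r (B : Matrix ι ι F) : ((r B).map σ)ᵀ = r (B.map σ)ᵀ := rfl
  refine ⟨_, r A, r J, hA.map r, hJ.map r, ?_, ?_, ?_⟩
  · rw [transpose_map_r, hs]
  · rw [transpose_map_r, ← map_mul, ← map_mul, h]
  · rw [← map_pow, coe_reindexAlgEquiv, charpoly_reindex]

-- `A` acts on a totally isotropic subspace and `(Āᵗ)⁻¹` on its dual.
theorem isIsometryPowerCharpoly_mul_tildePoly (hσ : Function.Involutive σ) (M : ℕ)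
    (hA : HasTameOrder F A) :
    IsIsometryPowerCharpoly σ M ((A ^ M).charpoly * tildePoly σ (A ^ M).charpoly) := by
  set D := ((A.map σ)ᵀ)⁻¹ with hD
  have D_mul : D * (A.map σ)ᵀ = 1 :=
    nonsing_inv_mul _ ((isUnit_iff_isUnit_det _).1 (isUnit_transpose_map σ hA.isUnit))
  have mul_D : A * (D.map σ)ᵀ = 1 := by
    have h := congrArg transpose (congrArg σ.mapMatrix D_mul)
    rwa [map_mul, map_one, transpose_mul, transpose_one, RingHom.mapMatrix_apply,
      RingHom.mapMatrix_apply, transpose_map, transpose_transpose,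
      matrix_map_map_of_involutive hσ] at h
  have charpoly_D_pow : (D ^ M).charpoly = tildePoly σ (A ^ M).charpoly := by
    rw [← charpoly_inv_transpose_map σ (hA.pow M).isUnit, hD, inv_pow', ← transpose_pow]
    exact congrArg (fun B => (Bᵀ)⁻¹.charpoly) (map_pow σ.mapMatrix A M).symm
  have tame_D : HasTameOrder F D := (hA.map σ.mapMatrix).transpose.inv
  have h := isIsometryPowerCharpoly_charpoly_pow (σ := σ) (J := fromBlocks 0 1 1 0) M
    (hA.fromBlocks tame_D)
    (IsUnit.of_mul_eq_one (fromBlocks 0 1 1 0) (by simp [fromBlocks_multiply]))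
    (by simp [fromBlocks_map, fromBlocks_transpose])
    (by simp [fromBlocks_map, fromBlocks_transpose, fromBlocks_multiply, D_mul, mul_D])
  rwa [fromBlocks_diagonal_pow, charpoly_fromBlocks_zero₁₂, charpoly_D_pow] at h

end FiniteIndex

theorem isIsometryPowerCharpoly_one (σ : F →+* F) (M : ℕ) : IsIsometryPowerCharpoly σ M 1 :=
  ⟨0, 1, 1, ⟨1, by simp, by simp⟩, isUnit_one, Subsingleton.elim _ _, Subsingleton.elim _ _,
    charpoly_isEmpty⟩

theorem IsIsometryPowerCharpoly.mul {c d : F[X]} (hc : IsIsometryPowerCharpoly σ M c)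
    (hd : IsIsometryPowerCharpoly σ M d) : IsIsometryPowerCharpoly σ M (c * d) := by
  obtain ⟨n, A, J, hA, hJ, hJs, hAJ, rfl⟩ := hc
  obtain ⟨m, B, K, hB, hK, hKs, hBK, rfl⟩ := hd
  have isUnit_fromBlocks : IsUnit (fromBlocks J 0 0 K) := by
    rw [isUnit_iff_isUnit_det] at *
    rw [det_fromBlocks_zero₁₂]
    exact hJ.mul hK
  have h := isIsometryPowerCharpoly_charpoly_pow (σ := σ) M (hA.fromBlocks hB) isUnit_fromBlocks
    (by simp [fromBlocks_map, fromBlocks_transpose, hJs, hKs])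
    (by simp [fromBlocks_map, fromBlocks_transpose, fromBlocks_multiply, hAJ, hBK])
  rwa [fromBlocks_diagonal_pow, charpoly_fromBlocks_zero₁₂] at h

theorem isIsometryPowerCharpoly_multiset_prod {s : Multiset F[X]}
    (hs : ∀ c ∈ s, IsIsometryPowerCharpoly σ M c) : IsIsometryPowerCharpoly σ M s.prod :=
  Multiset.prod_induction _ s (fun _ _ => IsIsometryPowerCharpoly.mul)
    (isIsometryPowerCharpoly_one σ M) hs

section RootField

variable {g : F[X]}

theorem charpoly_leftMulMatrix_root_pow (hg : Irreducible g) (hm : g.Monic)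
    {ι : Type*} [Fintype ι] [DecidableEq ι] (b : Module.Basis ι F (AdjoinRoot g)) (M : ℕ) :
    (Algebra.leftMulMatrix b (AdjoinRoot.root g) ^ M).charpoly = powPoly M g := by
  have := hm.finite_adjoinRoot
  rw [← map_pow, ← charpoly_mulLeft_root_pow hg]
  exact LinearMap.charpoly_toMatrix (LinearMap.mulLeft F (AdjoinRoot.root g ^ M)) b

theorem hasTameOrder_leftMulMatrix_root [Finite F] (hg : Irreducible g) (hm : g.Monic)
    (h0 : g.coeff 0 ≠ 0) {ι : Type*} [Fintype ι] [DecidableEq ι]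
    (b : Module.Basis ι F (AdjoinRoot g)) :
    HasTameOrder F (Algebra.leftMulMatrix b (AdjoinRoot.root g)) := by
  have : Fact (Irreducible g) := ⟨hg⟩
  have := hm.finite_adjoinRoot
  have : Finite (AdjoinRoot g) := Module.finite_of_finite F
  exact (HasTameOrder.of_ne_zero F (adjoinRoot_root_ne_zero h0)).map _

theorem isIsometryPowerCharpoly_powPoly_mul_tildePoly [Finite F] (hσ : Function.Involutive σ)
    (hg : Irreducible g) (hm : g.Monic) (h0 : g.coeff 0 ≠ 0) (M : ℕ) :
    IsIsometryPowerCharpoly σ M (powPoly M g * tildePoly σ (powPoly M g)) := by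
  have := hm.finite_adjoinRoot
  let b := Module.finBasis F (AdjoinRoot g)
  rw [← charpoly_leftMulMatrix_root_pow hg hm b M]
  exact isIsometryPowerCharpoly_mul_tildePoly hσ M (hasTameOrder_leftMulMatrix_root hg hm h0 b)

-- Multiplication by the root of `g` is an isometry of the hermitian trace form on the root field.
theorem IsSCIM.isIsometryPowerCharpoly_powPoly [Finite F] (hσ : Function.Involutive σ)
    (hg : IsSCIM σ g) (M : ℕ) : IsIsometryPowerCharpoly σ M (powPoly M g) := by
  have : Fact (Irreducible g) := ⟨hg.2.1⟩
  have := hg.1.finite_adjoinRoot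
  obtain ⟨τ, hτσ, τ_root, hτ⟩ := hg.exists_conj hσ
  let b := Module.finBasis F (AdjoinRoot g)
  have root_norm : AdjoinRoot.root g * τ (AdjoinRoot.root g) = 1 := by
    rw [τ_root, mul_inv_cancel₀ (adjoinRoot_root_ne_zero hg.2.2.1)]
  have h := isIsometryPowerCharpoly_charpoly_pow M
    (hasTameOrder_leftMulMatrix_root hg.2.1 hg.1 hg.2.2.1 b).transpose
    (isUnit_traceFormMatrix b hσ hτσ) (transpose_map_traceFormMatrix b hσ hτ hτσ)
    (leftMulMatrix_mul_traceFormMatrix_mul b hτσ root_norm)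
  rwa [← transpose_pow, charpoly_transpose, charpoly_leftMulMatrix_root_pow hg.2.1 hg.1] at h

end RootField

end Isometries

/-! ### Characteristic polynomials of semisimple `M`-th powers -/

theorem even_sum_of_map_eq_self {α : Type*} {s : Multiset α} {τ : α → α} {φ : α → ℕ}
    (hs : s.map τ = s) (hτ : ∀ a ∈ s, τ (τ a) = a) (hφ : ∀ a ∈ s, φ (τ a) = φ a)
    (hfix : ∀ a ∈ s, τ a = a → Even (φ a)) : Even (s.map φ).sum := by
  classical
  have count_eq (a : α) (ha : a ∈ s) : s.count (τ a) = s.count a := by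
    have injOn : Set.InjOn τ {a | a ∈ s} := fun a ha b hb h => by rw [← hτ a ha, h, hτ b hb]
    nth_rw 1 [← hs]
    exact Multiset.count_map_eq_count τ s injOn a ha
  rw [← ZMod.natCast_eq_zero_iff_even, Finset.sum_multiset_map_count, Nat.cast_sum]
  refine Finset.sum_involution (fun a _ => τ a) (fun a ha => ?_) (fun a ha hne ha' => hne ?_)
    (fun a ha => ?_) (fun a ha => hτ a (Multiset.mem_toFinset.1 ha))
  · rw [Multiset.mem_toFinset] at ha
    rw [count_eq a ha, hφ a ha]
    exact CharTwo.add_self_eq_zero _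
  · rw [ZMod.natCast_eq_zero_iff_even, smul_eq_mul]
    exact (hfix a (Multiset.mem_toFinset.1 ha) ha').mul_left _
  · rw [Multiset.mem_toFinset] at ha ⊢
    exact hs ▸ Multiset.mem_map_of_mem τ ha

section PowerFactors

variable {F : Type*} [Field F]

theorem multiset_eq_of_prod_eq {s t : Multiset F[X]} (hs : ∀ f ∈ s, f.Monic ∧ Irreducible f)
    (ht : ∀ f ∈ t, f.Monic ∧ Irreducible f) (h : s.prod = t.prod) : s = t := by
  have rel_associated : Multiset.Rel Associated s t := UniqueFactorizationMonoid.factors_unique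
    (fun f hf => (hs f hf).2) (fun f hf => (ht f hf).2) (.of_eq h)
  exact Multiset.rel_eq.1 (rel_associated.mono fun f hf g hg hfg =>
    eq_of_monic_of_associated (hs f hf).1 (ht g hg).1 hfg)

theorem multiplicity_multiset_prod {f : F[X]} (hf : Irreducible f) {s : Multiset F[X]}
    (hs : ∀ g ∈ s, g ≠ 0) : multiplicity f s.prod = (s.map (multiplicity f)).sum := by
  induction s using Multiset.induction_on with
  | empty => exact multiplicity_of_one_right hf.not_isUnit
  | cons g s ih =>
    have prod_ne_zero : (g ::ₘ s).prod ≠ 0 := Multiset.prod_ne_zero fun h => hs 0 h rfl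
    rw [Multiset.prod_cons] at prod_ne_zero ⊢
    rw [multiplicity_mul hf.prime (.of_prime_left hf.prime prod_ne_zero),
      ih fun g hg => hs g (Multiset.mem_cons_of_mem hg), Multiset.map_cons, Multiset.sum_cons]

section PowPoly

variable {f g : F[X]} {M : ℕ}

theorem powPoly_eq_pow (hg : Irreducible g) (hf : Irreducible f) (hm : f.Monic)
    (h : g ∣ f.comp (X ^ M)) : powPoly M g = f ^ (g.natDegree / f.natDegree) := by
  rw [powPoly, minpoly_root_pow_eq hg hf hm h]

theorem powPoly_eq_self (hg : Irreducible g) (hf : Irreducible f) (hm : f.Monic)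
    (hd : g.natDegree = f.natDegree) (h : g ∣ f.comp (X ^ M)) : powPoly M g = f := by
  rw [powPoly_eq_pow hg hf hm h, hd, Nat.div_self hf.natDegree_pos, pow_one]

theorem powPoly_comp_X_pow (hf : Irreducible f) (hm : f.Monic)
    (h : Irreducible (f.comp (X ^ M))) : powPoly M (f.comp (X ^ M)) = f ^ M := by
  rw [powPoly_eq_pow h hf hm dvd_rfl, natDegree_comp_X_pow,
    Nat.mul_div_cancel_left _ hf.natDegree_pos]

theorem powPoly_ne_zero (hg : Irreducible g) (hgm : g.Monic) (M : ℕ) : powPoly M g ≠ 0 := by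
  have : Fact (Irreducible g) := ⟨hg⟩
  have := hgm.finite_adjoinRoot
  exact pow_ne_zero _ (minpoly.ne_zero (Algebra.IsIntegral.isIntegral _))

open Classical in
theorem multiplicity_powPoly (hg : Irreducible g) (hgm : g.Monic) (hf : Irreducible f)
    (hm : f.Monic) :
    multiplicity f (powPoly M g) =
      if g ∣ f.comp (X ^ M) then g.natDegree / f.natDegree else 0 := by
  split_ifs with h
  · rw [powPoly_eq_pow hg hf hm h, multiplicity_pow_self_of_prime hf.prime]
  · have : Fact (Irreducible g) := ⟨hg⟩
    have := hgm.finite_adjoinRoot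
    have isIntegral : IsIntegral F (AdjoinRoot.root g ^ M) := Algebra.IsIntegral.isIntegral _
    refine multiplicity_eq_zero.2 fun hd => h ?_
    have eq_minpoly := eq_of_monic_of_associated hm (minpoly.monic isIntegral)
      (hf.associated_of_dvd (minpoly.irreducible isIntegral) (hf.prime.dvd_of_dvd_pow hd))
    rw [dvd_comp_X_pow_iff, eq_minpoly, minpoly.aeval]

end PowPoly

/-- A monic irreducible polynomial other than `X`: the minimal polynomial of a nonzero element of
an extension field. -/
def IsUnitMinpoly (f : F[X]) : Prop :=
  f.Monic ∧ Irreducible f ∧ f.coeff 0 ≠ 0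

/-- The irreducible polynomials that may occur with arbitrary multiplicity in the characteristic
polynomial of a semisimple `M`-th power: self-conjugate `M̃`-power polynomials and `M`-power
polynomials that are not self-conjugate. -/
def IsPowerFactor (σ : F →+* F) (M : ℕ) (f : F[X]) : Prop :=
  IsMtildePowerPoly σ M f ∨ (¬ IsSCIM σ f ∧ IsMPowerPoly M f)

/-- The condition on `c` that characterises the characteristic polynomials of semisimple `M`-th
powers in the unitary groups. -/
def IsPowerAdmissible (σ : F →+* F) (M : ℕ) (c : F[X]) : Prop :=
  c.Monic ∧ tildePoly σ c = c ∧
    ∀ f : F[X], f.Monic → Irreducible f → ¬ IsPowerFactor σ M f → M ∣ multiplicity f c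

variable {σ : F →+* F} {M : ℕ} {c f g : F[X]}

theorem coeff_zero_ne_zero_of_tildePoly_eq (hc : c ≠ 0) (h : tildePoly σ c = c) :
    c.coeff 0 ≠ 0 := fun h0 => hc <| by
  rw [← h, tildePoly, h0, map_zero, _root_.inv_zero, C_0, zero_mul]

theorem irreducible_comp_X_pow_of_not_isPowerFactor (hσ : Function.Involutive σ) (hM : M.Prime)
    (hf : Irreducible f) (hm : f.Monic) (hn : ¬ IsPowerFactor σ M f) :
    Irreducible (f.comp (X ^ M)) ∨ (M = 2 ∧ IsSCIM σ f) := by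
  by_cases hs : IsSCIM σ f
  · by_cases hM2 : M = 2
    · exact Or.inr ⟨hM2, hs⟩
    · exact Or.inl (hs.irreducible_comp_X_pow hσ hM hM2 fun h => hn (Or.inl h))
  · refine Or.inl ((irreducible_comp_X_pow_or_exists_factor hf hm hM).resolve_right ?_)
    rintro ⟨g, -, hgi, hgd, hg⟩
    exact hn (Or.inr ⟨hs, hm, hf, g, hgi, hgd, hg⟩)

theorem IsSCIM.natDegree_eq_two_mul (hg : IsSCIM σ g) (hf : IsSCIM σ f)
    (h : g ∣ f.comp (X ^ 2)) (hn : ¬ IsMtildePowerPoly σ 2 f) :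
    g.natDegree = f.natDegree * 2 := by
  obtain ⟨k, hk⟩ := natDegree_dvd_of_dvd_comp_X_pow hg.2.1 hg.1 hf.2.1 hf.1 h
  have natDegree_le := natDegree_le_of_dvd h (monic_comp_X_pow two_pos hf.1).ne_zero
  rw [natDegree_comp_X_pow, hk] at natDegree_le
  have k_le_two : k ≤ 2 := Nat.le_of_mul_le_mul_left natDegree_le hf.2.1.natDegree_pos
  have k_ne_zero : k ≠ 0 := by
    rintro rfl
    exact hg.2.1.natDegree_pos.ne' hk
  have k_ne_one : k ≠ 1 := by
    rintro rfl
    exact hn ⟨hf, g, hg, by rw [hk, mul_one], h⟩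
  rw [hk, show k = 2 by lia]

theorem IsSCIM.tildePoly_dvd_comp_X_pow (hf : IsSCIM σ f) (hM : 0 < M) (h : g ∣ f.comp (X ^ M)) :
    tildePoly σ g ∣ f.comp (X ^ M) := by
  simpa only [tildePoly_comp_X_pow σ hM, hf.2.2.2] using tildePoly_dvd_tildePoly σ h

open Classical in
-- The factors `g ≠ g̃` come in pairs contributing equally, and a factor `g = g̃` of `f(x²)` has
-- degree `2 deg f`.
theorem even_sum_natDegree_div (hσ : Function.Involutive σ) {G : Multiset F[X]}
    (hG : ∀ g ∈ G, IsUnitMinpoly g) (ht : tildePoly σ G.prod = G.prod)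
    (hf : IsSCIM σ f) (hn : ¬ IsMtildePowerPoly σ 2 f) :
    Even (G.map fun g => if g ∣ f.comp (X ^ 2) then g.natDegree / f.natDegree else 0).sum := by
  have tilde_tilde (g : F[X]) (hg : g ∈ G) : tildePoly σ (tildePoly σ g) = g :=
    tildePoly_tildePoly hσ (hG g hg).1 (hG g hg).2.2
  have map_tildePoly : G.map (tildePoly σ) = G := by
    let tildeHom : F[X] →* F[X] :=
      { toFun := tildePoly σ, map_one' := tildePoly_one σ, map_mul' := tildePoly_mul σ }
    refine multiset_eq_of_prod_eq (fun f hf => ?_) (fun g hg => ⟨(hG g hg).1, (hG g hg).2.1⟩)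
      ((map_multiset_prod tildeHom G).symm.trans ht)
    obtain ⟨g, hg, rfl⟩ := Multiset.mem_map.1 hf
    obtain ⟨hm, hi, h0⟩ := hG g hg
    exact ⟨monic_tildePoly σ h0, irreducible_tildePoly hσ hm h0 hi⟩
  refine even_sum_of_map_eq_self map_tildePoly tilde_tilde (fun g hg => ?_) fun g hg hgt => ?_
  · have dvd_iff : tildePoly σ g ∣ f.comp (X ^ 2) ↔ g ∣ f.comp (X ^ 2) :=
      ⟨fun h => tilde_tilde g hg ▸ hf.tildePoly_dvd_comp_X_pow two_pos h,
        hf.tildePoly_dvd_comp_X_pow two_pos⟩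
    simp only [dvd_iff, natDegree_tildePoly σ (hG g hg).2.2]
  · obtain ⟨hm, hi, h0⟩ := hG g hg
    split_ifs with h
    · rw [IsSCIM.natDegree_eq_two_mul ⟨hm, hi, h0, hgt⟩ hf h hn,
        Nat.mul_div_cancel_left _ hf.2.1.natDegree_pos]
      exact even_two
    · exact Even.zero

theorem dvd_multiplicity_charpoly_pow (hσ : Function.Involutive σ) (hM : M.Prime) {n : ℕ}
    {A : Matrix (Fin n) (Fin n) F} (hA : HasTameOrder F A)
    (ht : tildePoly σ A.charpoly = A.charpoly) (hf : Irreducible f) (hm : f.Monic)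
    (hn : ¬ IsPowerFactor σ M f) : M ∣ multiplicity f (A ^ M).charpoly := by
  classical
  obtain ⟨G, hG, charpoly_eq, charpoly_pow_eq⟩ :=
    exists_multiset_charpoly_pow_eq M (hA.map (Matrix.toLinAlgEquiv' (R := F))).isSemisimple
  rw [← map_pow] at charpoly_pow_eq
  replace charpoly_eq : A.charpoly = G.prod := by rw [← charpoly_eq]; exact (charpoly_toLin' A).symm
  replace charpoly_pow_eq : (A ^ M).charpoly = (G.map (powPoly M)).prod := by
    rw [← charpoly_pow_eq]; exact (charpoly_toLin' _).symm
  have powPoly_ne_zero : ∀ c ∈ G.map (powPoly M), c ≠ 0 := by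
    intro c hc
    obtain ⟨g, hg, rfl⟩ := Multiset.mem_map.1 hc
    exact powPoly_ne_zero (hG g hg).2 (hG g hg).1 M
  have multiplicity_eq (g : F[X]) (hg : g ∈ G) : (multiplicity f ∘ powPoly M) g =
      if g ∣ f.comp (X ^ M) then g.natDegree / f.natDegree else 0 :=
    multiplicity_powPoly (hG g hg).2 (hG g hg).1 hf hm
  rw [charpoly_pow_eq, multiplicity_multiset_prod hf powPoly_ne_zero, Multiset.map_map,
    Multiset.map_congr rfl multiplicity_eq]
  rcases irreducible_comp_X_pow_of_not_isPowerFactor hσ hM hf hm hn with hirr | ⟨rfl, hs⟩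
  · apply Multiset.dvd_sum
    intro x hx
    obtain ⟨g, hg, rfl⟩ := Multiset.mem_map.1 hx
    split_ifs with hd
    · rw [eq_of_monic_of_associated (hG g hg).1 (monic_comp_X_pow hM.pos hm)
        ((hG g hg).2.associated_of_dvd hirr hd), natDegree_comp_X_pow,
        Nat.mul_div_cancel_left _ hf.natDegree_pos]
    · exact dvd_zero _
  · have isUnitMinpoly : ∀ g ∈ G, IsUnitMinpoly g := fun g hg => ⟨(hG g hg).1, (hG g hg).2,
      coeff_zero_ne_zero_of_dvd (charpoly_eq ▸ Multiset.dvd_prod hg)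
        (charpoly_coeff_zero_ne_zero hA.isUnit)⟩
    exact (even_sum_natDegree_div hσ isUnitMinpoly (charpoly_eq ▸ ht) hs
      fun h => hn (Or.inl h)).two_dvd

end PowerFactors

section PowerAtoms

variable {F : Type*} [Field F] {σ : F →+* F} {M : ℕ} {c f g : F[X]}

theorem IsUnitMinpoly.isSCIM_iff (hf : IsUnitMinpoly f) : IsSCIM σ f ↔ tildePoly σ f = f :=
  ⟨fun h => h.2.2.2, fun h => ⟨hf.1, hf.2.1, hf.2.2, h⟩⟩

theorem IsUnitMinpoly.tildePoly_tildePoly (hσ : Function.Involutive σ) (hf : IsUnitMinpoly f) :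
    tildePoly σ (tildePoly σ f) = f :=
  _root_.tildePoly_tildePoly hσ hf.1 hf.2.2

theorem IsUnitMinpoly.tildePoly (hσ : Function.Involutive σ) (hf : IsUnitMinpoly f) :
    IsUnitMinpoly (tildePoly σ f) :=
  ⟨monic_tildePoly σ hf.2.2, irreducible_tildePoly hσ hf.1 hf.2.2 hf.2.1,
    coeff_zero_tildePoly_ne_zero σ hf.1 hf.2.2⟩

theorem IsUnitMinpoly.isSCIM_tildePoly_iff (hσ : Function.Involutive σ) (hf : IsUnitMinpoly f) :
    IsSCIM σ (_root_.tildePoly σ f) ↔ IsSCIM σ f := by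
  rw [(hf.tildePoly hσ).isSCIM_iff, hf.isSCIM_iff, hf.tildePoly_tildePoly hσ, eq_comm]

theorem IsMPowerPoly.exists_monic (h : IsMPowerPoly M f) :
    ∃ g : F[X], g.Monic ∧ Irreducible g ∧ g.natDegree = f.natDegree ∧ g ∣ f.comp (X ^ M) := by
  classical
  obtain ⟨-, -, g, hg, hd, hdvd⟩ := h
  exact ⟨normalize g, monic_normalize hg.ne_zero, (normalize_associated g).irreducible_iff.2 hg,
    (natDegree_eq_of_degree_eq degree_normalize).trans hd,
    (normalize_associated g).dvd.trans hdvd⟩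

theorem IsMPowerPoly.tildePoly (hσ : Function.Involutive σ) (hM : 0 < M) (h0 : f.coeff 0 ≠ 0)
    (h : IsMPowerPoly M f) : IsMPowerPoly M (tildePoly σ f) := by
  obtain ⟨g, hgm, hg, hd, hdvd⟩ := h.exists_monic
  have hg0 : g.coeff 0 ≠ 0 :=
    coeff_zero_ne_zero_of_dvd hdvd (by rwa [coeff_zero_comp_X_pow hM])
  refine ⟨monic_tildePoly σ h0, irreducible_tildePoly hσ h.1 h0 h.2.1, _,
    irreducible_tildePoly hσ hgm hg0 hg, ?_, ?_⟩
  · rw [natDegree_tildePoly σ hg0, natDegree_tildePoly σ h0, hd]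
  · rw [← tildePoly_comp_X_pow σ hM]
    exact tildePoly_dvd_tildePoly σ hdvd

theorem IsPowerFactor.tildePoly (hσ : Function.Involutive σ) (hM : 0 < M) (hf : IsUnitMinpoly f)
    (h : IsPowerFactor σ M f) : IsPowerFactor σ M (tildePoly σ f) := by
  rcases h with h | ⟨hs, h⟩
  · rw [h.1.2.2.2]
    exact Or.inl h
  · exact Or.inr ⟨mt (hf.isSCIM_tildePoly_iff hσ).1 hs, h.tildePoly hσ hM hf.2.2⟩

theorem IsUnitMinpoly.isPowerFactor_tildePoly_iff (hσ : Function.Involutive σ) (hM : 0 < M)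
    (hf : IsUnitMinpoly f) : IsPowerFactor σ M (_root_.tildePoly σ f) ↔ IsPowerFactor σ M f := by
  refine ⟨fun h => ?_, fun h => h.tildePoly hσ hM hf⟩
  simpa only [hf.tildePoly_tildePoly hσ] using h.tildePoly hσ hM (hf.tildePoly hσ)

open Classical in
/-- The self-conjugate polynomial of least degree divisible by the irreducible polynomial `f`. -/
noncomputable def selfConjBase (σ : F →+* F) (f : F[X]) : F[X] :=
  if IsSCIM σ f then f else f * tildePoly σ f

open Classical in
/-- The indecomposable characteristic polynomial of a semisimple `M`-th power of a unitary matrix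
that is divisible by the irreducible polynomial `f`. -/
noncomputable def powerAtom (σ : F →+* F) (M : ℕ) (f : F[X]) : F[X] :=
  if IsPowerFactor σ M f then selfConjBase σ f else selfConjBase σ f ^ M

theorem IsUnitMinpoly.monic_selfConjBase (hf : IsUnitMinpoly f) : (selfConjBase σ f).Monic := by
  unfold selfConjBase
  split_ifs
  · exact hf.1
  · exact hf.1.mul (monic_tildePoly σ hf.2.2)

theorem IsUnitMinpoly.tildePoly_selfConjBase (hσ : Function.Involutive σ) (hf : IsUnitMinpoly f) :
    _root_.tildePoly σ (selfConjBase σ f) = selfConjBase σ f := by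
  unfold selfConjBase
  split_ifs with h
  · exact h.2.2.2
  · rw [tildePoly_mul, hf.tildePoly_tildePoly hσ, mul_comm]

theorem dvd_selfConjBase (σ : F →+* F) (f : F[X]) : f ∣ selfConjBase σ f := by
  unfold selfConjBase
  split_ifs
  · exact dvd_rfl
  · exact dvd_mul_right _ _

theorem IsUnitMinpoly.eq_or_eq_tildePoly_of_dvd_selfConjBase (hσ : Function.Involutive σ)
    (hf : IsUnitMinpoly f) (hgm : g.Monic) (hg : Irreducible g) (h : g ∣ selfConjBase σ f) :
    g = f ∨ g = _root_.tildePoly σ f := by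
  have eq_of_dvd {f : F[X]} (hf : IsUnitMinpoly f) (h : g ∣ f) : g = f :=
    eq_of_monic_of_associated hgm hf.1 (hg.associated_of_dvd hf.2.1 h)
  unfold selfConjBase at h
  split_ifs at h
  · exact Or.inl (eq_of_dvd hf h)
  · exact (hg.prime.dvd_or_dvd h).imp (eq_of_dvd hf) (eq_of_dvd (hf.tildePoly hσ))

theorem IsUnitMinpoly.monic_powerAtom (hf : IsUnitMinpoly f) : (powerAtom σ M f).Monic := by
  unfold powerAtom
  split_ifs
  · exact hf.monic_selfConjBase
  · exact hf.monic_selfConjBase.pow M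

theorem dvd_powerAtom (σ : F →+* F) (hM : 0 < M) (f : F[X]) : f ∣ powerAtom σ M f := by
  unfold powerAtom
  split_ifs
  · exact dvd_selfConjBase σ f
  · exact dvd_pow (dvd_selfConjBase σ f) hM.ne'

theorem IsUnitMinpoly.natDegree_le_natDegree_powerAtom (σ : F →+* F) (hM : 0 < M)
    (hf : IsUnitMinpoly f) : f.natDegree ≤ (powerAtom σ M f).natDegree :=
  natDegree_le_of_dvd (dvd_powerAtom σ hM f) hf.monic_powerAtom.ne_zero

theorem IsUnitMinpoly.natDegree_powerAtom_pos (σ : F →+* F) (hM : 0 < M)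
    (hf : IsUnitMinpoly f) : 0 < (powerAtom σ M f).natDegree :=
  hf.2.1.natDegree_pos.trans_le (hf.natDegree_le_natDegree_powerAtom σ hM)

theorem IsUnitMinpoly.eq_or_eq_tildePoly_of_dvd_powerAtom (hσ : Function.Involutive σ)
    (hf : IsUnitMinpoly f) (hgm : g.Monic) (hg : Irreducible g) (h : g ∣ powerAtom σ M f) :
    g = f ∨ g = _root_.tildePoly σ f := by
  refine hf.eq_or_eq_tildePoly_of_dvd_selfConjBase hσ hgm hg ?_
  unfold powerAtom at h
  split_ifs at h
  · exact h
  · exact hg.prime.dvd_of_dvd_pow h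

theorem IsUnitMinpoly.powerAtom_tildePoly (hσ : Function.Involutive σ) (hM : 0 < M)
    (hf : IsUnitMinpoly f) : powerAtom σ M (_root_.tildePoly σ f) = powerAtom σ M f := by
  have selfConjBase_tildePoly : selfConjBase σ (_root_.tildePoly σ f) = selfConjBase σ f := by
    by_cases hs : IsSCIM σ f
    · rw [hs.2.2.2]
    · rw [selfConjBase, selfConjBase, if_neg hs, if_neg (mt (hf.isSCIM_tildePoly_iff hσ).1 hs),
        hf.tildePoly_tildePoly hσ, mul_comm]
  unfold powerAtom
  rw [selfConjBase_tildePoly]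
  congr 1
  exact propext (hf.isPowerFactor_tildePoly_iff hσ hM)

theorem powerAtom_eq_powerAtom_iff (hσ : Function.Involutive σ) (hM : 0 < M)
    (hf : IsUnitMinpoly f) (hg : IsUnitMinpoly g) :
    powerAtom σ M g = powerAtom σ M f ↔ g = f ∨ g = tildePoly σ f := by
  refine ⟨fun h => ?_, ?_⟩
  · exact hf.eq_or_eq_tildePoly_of_dvd_powerAtom hσ hg.1 hg.2.1 (h ▸ dvd_powerAtom σ hM g)
  · rintro (rfl | rfl)
    · rfl
    · exact hf.powerAtom_tildePoly hσ hM

theorem isPowerAdmissible_one (σ : F →+* F) (M : ℕ) : IsPowerAdmissible σ M 1 :=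
  ⟨monic_one, tildePoly_one σ, fun f _ hf _ => by simp [multiplicity_of_one_right hf.not_isUnit]⟩

theorem IsPowerAdmissible.mul {a b : F[X]} (ha : IsPowerAdmissible σ M a)
    (hb : IsPowerAdmissible σ M b) : IsPowerAdmissible σ M (a * b) := by
  refine ⟨ha.1.mul hb.1, ?_, fun f hm hf hn => ?_⟩
  · rw [tildePoly_mul, ha.2.1, hb.2.1]
  · rw [multiplicity_mul hf.prime (.of_prime_left hf.prime (ha.1.mul hb.1).ne_zero)]
    exact dvd_add (ha.2.2 f hm hf hn) (hb.2.2 f hm hf hn)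

theorem IsPowerAdmissible.of_mul_left {a b : F[X]} (ha : IsPowerAdmissible σ M a)
    (hab : IsPowerAdmissible σ M (a * b)) : IsPowerAdmissible σ M b := by
  refine ⟨ha.1.of_mul_monic_left hab.1, ?_, fun f hm hf hn => ?_⟩
  · have tildePoly_eq := hab.2.1
    rw [tildePoly_mul, ha.2.1] at tildePoly_eq
    exact mul_left_cancel₀ ha.1.ne_zero tildePoly_eq
  · have dvd_multiplicity := hab.2.2 f hm hf hn
    rw [multiplicity_mul hf.prime (.of_prime_left hf.prime hab.1.ne_zero)] at dvd_multiplicity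
    exact (Nat.dvd_add_right (ha.2.2 f hm hf hn)).1 dvd_multiplicity

theorem IsUnitMinpoly.isPowerAdmissible_powerAtom (hσ : Function.Involutive σ) (hM : 0 < M)
    (hf : IsUnitMinpoly f) : IsPowerAdmissible σ M (powerAtom σ M f) := by
  refine ⟨hf.monic_powerAtom, ?_, fun g hgm hg hn => ?_⟩
  · unfold powerAtom
    split_ifs
    · exact hf.tildePoly_selfConjBase hσ
    · rw [tildePoly_pow, hf.tildePoly_selfConjBase hσ]
  · by_cases hp : IsPowerFactor σ M f
    · have not_dvd : ¬ g ∣ powerAtom σ M f := fun h => hn <| by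
        rcases hf.eq_or_eq_tildePoly_of_dvd_powerAtom hσ hgm hg h with rfl | rfl
        · exact hp
        · exact hp.tildePoly hσ hM hf
      rw [multiplicity_eq_zero.2 not_dvd]
      exact dvd_zero _
    · rw [powerAtom, if_neg hp, FiniteMultiplicity.multiplicity_pow hg.prime
        (.of_prime_left hg.prime hf.monic_selfConjBase.ne_zero)]
      exact dvd_mul_right _ _

theorem IsUnitMinpoly.selfConjBase_pow_dvd (hσ : Function.Involutive σ) (hf : IsUnitMinpoly f)
    (hc : _root_.tildePoly σ c = c) {k : ℕ} (h : f ^ k ∣ c) : selfConjBase σ f ^ k ∣ c := by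
  unfold selfConjBase
  split_ifs with hs
  · exact h
  · have tildePoly_pow_dvd : _root_.tildePoly σ f ^ k ∣ c := by
      rw [← tildePoly_pow, ← hc]
      exact tildePoly_dvd_tildePoly σ h
    have isCoprime : IsCoprime f (_root_.tildePoly σ f) :=
      hf.2.1.coprime_iff_not_dvd.2 fun hd => hs <| hf.isSCIM_iff.2
        (eq_of_monic_of_associated hf.1 (hf.tildePoly hσ).1
          (hf.2.1.associated_of_dvd (hf.tildePoly hσ).2.1 hd)).symm
    rw [mul_pow]
    exact isCoprime.pow.mul_dvd h tildePoly_pow_dvd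

theorem IsUnitMinpoly.powerAtom_dvd (hσ : Function.Involutive σ) (hf : IsUnitMinpoly f)
    (hc : IsPowerAdmissible σ M c) (h : f ∣ c) : powerAtom σ M f ∣ c := by
  unfold powerAtom
  split_ifs with hp
  · simpa using hf.selfConjBase_pow_dvd hσ hc.2.1 (k := 1) (by rwa [pow_one])
  · refine hf.selfConjBase_pow_dvd hσ hc.2.1 (pow_dvd_of_le_multiplicity ?_)
    exact Nat.le_of_dvd (multiplicity_pos_of_dvd h) (hc.2.2 f hf.1 hf.2.1 hp)

theorem isCoprime_powerAtom (hσ : Function.Involutive σ) (hM : 0 < M) (hf : IsUnitMinpoly f)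
    (hg : IsUnitMinpoly g) (hfg : powerAtom σ M f ≠ powerAtom σ M g) :
    IsCoprime (powerAtom σ M f) (powerAtom σ M g) := by
  classical
  have powerAtom_eq {h f : F[X]} (hm : h.Monic) (hi : Irreducible h) (hf : IsUnitMinpoly f)
      (hd : h ∣ powerAtom σ M f) : powerAtom σ M h = powerAtom σ M f := by
    rcases hf.eq_or_eq_tildePoly_of_dvd_powerAtom hσ hm hi hd with rfl | rfl
    · rfl
    · exact hf.powerAtom_tildePoly hσ hM
  by_contra hc
  rw [← EuclideanDomain.gcd_isUnit_iff] at hc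
  obtain ⟨h, hm, hi, hd⟩ := exists_monic_irreducible_factor _ hc
  exact hfg ((powerAtom_eq hm hi hf (hd.trans (EuclideanDomain.gcd_dvd_left _ _))).symm.trans
    (powerAtom_eq hm hi hg (hd.trans (EuclideanDomain.gcd_dvd_right _ _))))

/-- The atoms of the monoid of characteristic polynomials of semisimple `M`-th powers. -/
def powerAtoms (σ : F →+* F) (M : ℕ) : Set F[X] :=
  powerAtom σ M '' {f | IsUnitMinpoly f}

-- An admissible polynomial is exhausted by dividing out the atom of an irreducible factor.
theorem isPowerAdmissible_iff_mem_closure (hσ : Function.Involutive σ) (hM : 0 < M) :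
    IsPowerAdmissible σ M c ↔ c ∈ Submonoid.closure (powerAtoms σ M) := by
  refine ⟨fun hc => ?_, fun hc => ?_⟩
  · induction hn : c.natDegree using Nat.strong_induction_on generalizing c with
    | _ n ih =>
      by_cases hu : IsUnit c
      · rw [hc.1.eq_one_of_isUnit hu]
        exact one_mem _
      · obtain ⟨f, hm, hi, hd⟩ := exists_monic_irreducible_factor c hu
        have hf : IsUnitMinpoly f := ⟨hm, hi, coeff_zero_ne_zero_of_dvd hd
          (coeff_zero_ne_zero_of_tildePoly_eq hc.1.ne_zero hc.2.1)⟩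
        obtain ⟨b, rfl⟩ := hf.powerAtom_dvd hσ hc hd
        have hb := (hf.isPowerAdmissible_powerAtom hσ hM).of_mul_left hc
        refine mul_mem (Submonoid.subset_closure ⟨f, hf, rfl⟩) (ih b.natDegree ?_ hb rfl)
        rw [← hn, hf.monic_powerAtom.natDegree_mul hb.1]
        exact Nat.lt_add_of_pos_left (hf.natDegree_powerAtom_pos σ hM)
  · induction hc using Submonoid.closure_induction with
    | mem c hc =>
      obtain ⟨f, hf, rfl⟩ := hc
      exact hf.isPowerAdmissible_powerAtom hσ hM
    | one => exact isPowerAdmissible_one σ M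
    | mul a b _ _ ha hb => exact ha.mul hb

section Realization

variable [Finite F]

theorem IsPowerFactor.isIsometryPowerCharpoly_selfConjBase (hσ : Function.Involutive σ)
    (hM : 0 < M) (hf : IsUnitMinpoly f) (h : IsPowerFactor σ M f) :
    IsIsometryPowerCharpoly σ M (selfConjBase σ f) := by
  rcases h with ⟨hs, g, hg, hgd, hdvd⟩ | ⟨hs, h⟩
  · rw [selfConjBase, if_pos hs, ← powPoly_eq_self hg.2.1 hf.2.1 hf.1 hgd hdvd]
    exact hg.isIsometryPowerCharpoly_powPoly hσ M
  · obtain ⟨g, hgm, hg, hgd, hdvd⟩ := h.exists_monic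
    rw [selfConjBase, if_neg hs, ← powPoly_eq_self hg hf.2.1 hf.1 hgd hdvd]
    exact isIsometryPowerCharpoly_powPoly_mul_tildePoly hσ hg hgm
      (coeff_zero_ne_zero_of_dvd hdvd (by rw [coeff_zero_comp_X_pow hM]; exact hf.2.2)) M

theorem IsUnitMinpoly.isIsometryPowerCharpoly_selfConjBase_pow (hσ : Function.Involutive σ)
    (hM : M.Prime) (hf : IsUnitMinpoly f) (hn : ¬ IsPowerFactor σ M f) :
    IsIsometryPowerCharpoly σ M (selfConjBase σ f ^ M) := by
  have coeff_zero : (f.comp (X ^ M)).coeff 0 ≠ 0 := by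
    rw [coeff_zero_comp_X_pow hM.pos]
    exact hf.2.2
  have monic_comp := monic_comp_X_pow hM.pos hf.1
  by_cases hirr : Irreducible (f.comp (X ^ M))
  · have powPoly_comp := powPoly_comp_X_pow hf.2.1 hf.1 hirr
    unfold selfConjBase
    split_ifs with hs
    · rw [← powPoly_comp]
      refine IsSCIM.isIsometryPowerCharpoly_powPoly hσ ⟨monic_comp, hirr, coeff_zero, ?_⟩ M
      rw [tildePoly_comp_X_pow σ hM.pos, hs.2.2.2]
    · rw [mul_pow, ← tildePoly_pow, ← powPoly_comp]
      exact isIsometryPowerCharpoly_powPoly_mul_tildePoly hσ hirr monic_comp coeff_zero M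
  · obtain ⟨rfl, hs⟩ :=
      (irreducible_comp_X_pow_of_not_isPowerFactor hσ hM hf.2.1 hf.1 hn).resolve_left hirr
    obtain ⟨g, hgm, hg, hgd, hdvd⟩ :=
      (irreducible_comp_X_pow_or_exists_factor hf.2.1 hf.1 hM).resolve_left hirr
    have isometry := isIsometryPowerCharpoly_powPoly_mul_tildePoly hσ hg hgm
      (coeff_zero_ne_zero_of_dvd hdvd coeff_zero) 2
    rw [selfConjBase, if_pos hs]
    rwa [powPoly_eq_self hg hf.2.1 hf.1 hgd hdvd, hs.2.2.2, ← sq] at isometry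

theorem IsPowerAdmissible.isIsometryPowerCharpoly (hσ : Function.Involutive σ) (hM : M.Prime)
    (hc : IsPowerAdmissible σ M c) : IsIsometryPowerCharpoly σ M c := by
  obtain ⟨s, hs, rfl⟩ := Submonoid.exists_multiset_of_mem_closure
    ((isPowerAdmissible_iff_mem_closure hσ hM.pos).1 hc)
  refine isIsometryPowerCharpoly_multiset_prod fun c hc => ?_
  obtain ⟨f, hf, rfl⟩ := hs c hc
  unfold powerAtom
  split_ifs with hp
  · exact hp.isIsometryPowerCharpoly_selfConjBase hσ hM.pos hf
  · exact IsUnitMinpoly.isIsometryPowerCharpoly_selfConjBase_pow hσ hM hf hp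

end Realization

end PowerAtoms

/-! ### Conjugacy classes of semisimple `M`-th powers -/

section Classes

variable {F : Type*} [Field F] {σ : F →+* F} {M n : ℕ} {A B : Matrix (Fin n) (Fin n) F}

theorem IsUnitaryMat.pow (hσ : Function.Involutive σ) (hA : IsUnitaryMat σ A) (k : ℕ) :
    IsUnitaryMat σ (A ^ k) := by
  let := unitaryStarRing hσ n
  rw [isUnitaryMat_iff_mem_unitary hσ] at hA ⊢
  exact pow_mem hA k

theorem IsUnitaryMat.tildePoly_charpoly (hA : IsUnitaryMat σ A) :
    tildePoly σ A.charpoly = A.charpoly :=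
  tildePoly_charpoly_of_mul_mul_transpose_map_eq hA.1 isUnit_antidiagMat hA.2

theorem ConjU.charpoly_eq (h : ConjU σ A B) : A.charpoly = B.charpoly := by
  obtain ⟨P, ⟨⟨u, rfl⟩, -⟩, rfl⟩ := h
  rw [Matrix.charpoly_units_conj]

theorem isUnitaryMat_units_conj (u : (Matrix (Fin n) (Fin n) F)ˣ) (hA : IsUnit A)
    (h : A * (u * antidiagMat F n * (u.val.map σ)ᵀ) * (A.map σ)ᵀ =
      u * antidiagMat F n * (u.val.map σ)ᵀ) :
    IsUnitaryMat σ (u⁻¹ * A * u : Matrix (Fin n) (Fin n) F) := by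
  refine ⟨(u⁻¹.isUnit.mul hA).mul u.isUnit, ?_⟩
  have transpose_map_cancel : (u.val.map σ)ᵀ * (u⁻¹.val.map σ)ᵀ = 1 := by
    rw [← Matrix.transpose_mul, ← Matrix.map_mul, u.inv_mul, Matrix.map_one _ (map_zero σ)
      (map_one σ), Matrix.transpose_one]
  calc u⁻¹.val * A * u * antidiagMat F n * ((u⁻¹.val * A * u).map σ)ᵀ
    _ = u⁻¹.val * (A * (u * antidiagMat F n * (u.val.map σ)ᵀ) * (A.map σ)ᵀ) *
        (u⁻¹.val.map σ)ᵀ := by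
      simp only [Matrix.map_mul, Matrix.transpose_mul, Matrix.mul_assoc]
    _ = u⁻¹.val * u * antidiagMat F n * ((u.val.map σ)ᵀ * (u⁻¹.val.map σ)ᵀ) := by
      rw [h]
      simp only [Matrix.mul_assoc]
    _ = antidiagMat F n := by
      rw [transpose_map_cancel, u.inv_mul, Matrix.one_mul, Matrix.mul_one]

theorem HasTameOrder.exists_semiconjBy_of_charpoly_eq (hA : HasTameOrder F A)
    (hB : HasTameOrder F B) (h : A.charpoly = B.charpoly) : ∃ P, IsUnit P ∧ SemiconjBy P A B := by
  let toEnd := Matrix.toLinAlgEquiv' (R := F) (n := Fin n)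
  obtain ⟨e, he⟩ := exists_eq_conj_of_charpoly_eq (hA.map toEnd).isSemisimple
    (hB.map toEnd).isSemisimple ((charpoly_toLin' A).trans (h.trans (charpoly_toLin' B).symm))
  have isUnit_e : IsUnit (e : Module.End F (Fin n → F)) :=
    (Module.End.isUnit_iff _).2 e.bijective
  refine ⟨toEnd.symm e, isUnit_e.map toEnd.symm, toEnd.injective ?_⟩
  rw [map_mul, map_mul, he, AlgEquiv.apply_symm_apply]
  ext x
  simp

theorem IsMPowerInU.isPowerAdmissible_charpoly (hσ : Function.Involutive σ) (hM : M.Prime)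
    (hMF : (M : F) ≠ 0) (hA : HasTameOrder F A) (h : IsMPowerInU σ M A) :
    IsPowerAdmissible σ M A.charpoly := by
  obtain ⟨B, hB, rfl⟩ := h
  exact ⟨Matrix.charpoly_monic _, (hB.pow hσ M).tildePoly_charpoly, fun f hm hf hn =>
    dvd_multiplicity_charpoly_pow hσ hM (hA.of_pow hMF) hB.tildePoly_charpoly hf hm hn⟩

variable [Finite F]

theorem IsPowerAdmissible.exists_isUnitaryMat (hσ : Function.Involutive σ) (hne : ∃ x, σ x ≠ x)
    (hM : M.Prime) {c : F[X]} (hc : IsPowerAdmissible σ M c) :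
    ∃ B : Matrix (Fin c.natDegree) (Fin c.natDegree) F,
      IsUnitaryMat σ B ∧ HasTameOrder F B ∧ (B ^ M).charpoly = c := by
  obtain ⟨m, A, J, hA, hJ, hs, h, rfl⟩ := hc.isIsometryPowerCharpoly hσ hM
  rw [Matrix.charpoly_natDegree_eq_dim, Fintype.card_fin]
  obtain ⟨_, ⟨u, rfl⟩, rfl⟩ := exists_eq_mul_antidiagMat_mul hσ hne hJ hs
  refine ⟨(u⁻¹ * A * u : Matrix (Fin m) (Fin m) F), isUnitaryMat_units_conj u hA.isUnit h, ?_, ?_⟩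
  · obtain ⟨N, hN, hAN⟩ := hA
    exact ⟨N, hN, by rw [u.conj_pow', hAN, Matrix.mul_one, u.inv_mul]⟩
  · rw [u.conj_pow', Matrix.coe_units_inv, Matrix.charpoly_units_conj']

theorem IsUnitaryMat.hasTameOrder (hA : IsUnitaryMat σ A) (hs : Squarefree (minpoly F A)) :
    HasTameOrder F A :=
  .of_squarefree_minpoly (isOfFinOrder_iff_isUnit.2 hA.1) hs

theorem numSSPowerClasses_eq (hσ : Function.Involutive σ) (hne : ∃ x, σ x ≠ x)
    (hM : M.Prime) (hMF : (M : F) ≠ 0) (n : ℕ) :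
    numSSPowerClasses σ M n = {c | IsPowerAdmissible σ M c ∧ c.natDegree = n}.ncard := by
  let charpolyOf (A : {A : Matrix (Fin n) (Fin n) F // IsUnitaryMat σ A ∧
      Squarefree (minpoly F A) ∧ IsMPowerInU σ M A}) :
      {c | IsPowerAdmissible σ M c ∧ c.natDegree = n} :=
    ⟨A.1.charpoly,
      A.2.2.2.isPowerAdmissible_charpoly hσ hM hMF (A.2.1.hasTameOrder A.2.2.1),
      by rw [Matrix.charpoly_natDegree_eq_dim, Fintype.card_fin]⟩
  rw [numSSPowerClasses, ← Nat.card_coe_set_eq]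
  refine Nat.card_congr (Equiv.ofBijective
    (Quot.lift charpolyOf fun A B hAB => Subtype.ext hAB.charpoly_eq) ⟨?_, ?_⟩)
  · rintro ⟨A⟩ ⟨B⟩ hAB
    obtain ⟨P, hP, hPAB⟩ := (A.2.1.hasTameOrder A.2.2.1).exists_semiconjBy_of_charpoly_eq
      (B.2.1.hasTameOrder B.2.2.1) (congrArg Subtype.val hAB)
    exact Quot.sound (conjU_of_semiconjBy hσ hne A.2.1 B.2.1 hP hPAB)
  · rintro ⟨c, hc, rfl⟩
    obtain ⟨B, hB, tame_B, charpoly_eq⟩ := hc.exists_isUnitaryMat hσ hne hM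
    exact ⟨Quot.mk _ ⟨B ^ M, hB.pow hσ M, (tame_B.pow M).squarefree_minpoly, B, hB, rfl⟩,
      Subtype.ext charpoly_eq⟩

end Classes

/-! ### Generating functions by degree -/

section FormalPowerSeries

theorem powerSeries_inv_pow {k : Type*} [Field k] (a : PowerSeries k) (N : ℕ) :
    (a ^ N)⁻¹ = a⁻¹ ^ N := by
  induction N with
  | zero => simp
  | succ N ih => rw [pow_succ, PowerSeries.mul_inv_rev, ih, pow_succ']

theorem X_pow_dvd_inv_one_sub_X_pow_pow_sub_one {k : Type*} [Field k] {w : ℕ} (hw : 0 < w)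
    (N : ℕ) :
    (PowerSeries.X : PowerSeries k) ^ w ∣ ((1 - PowerSeries.X ^ w) ^ N)⁻¹ - 1 := by
  have inv_mul : ((1 - PowerSeries.X ^ w : PowerSeries k) ^ N)⁻¹ *
      (1 - PowerSeries.X ^ w) ^ N = 1 := PowerSeries.inv_mul_cancel _ (by simp [hw.ne'])
  have dvd : (PowerSeries.X : PowerSeries k) ^ w ∣ 1 - (1 - PowerSeries.X ^ w) ^ N := by
    have one_sub_dvd := one_sub_dvd_one_sub_pow (1 - PowerSeries.X ^ w : PowerSeries k) N
    rwa [sub_sub_cancel] at one_sub_dvd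
  convert dvd.mul_left ((1 - PowerSeries.X ^ w) ^ N)⁻¹ using 1
  rw [mul_sub, mul_one, inv_mul]

instance instContinuousMulPowerSeriesRat : ContinuousMul (PowerSeries ℚ) := by
  let _ : TopologicalSpace ℚ := ⊥
  have : DiscreteTopology ℚ := ⟨rfl⟩
  exact (PowerSeries.WithPiTopology.instIsTopologicalSemiring ℚ).toContinuousMul

instance instT3SpacePowerSeriesRat : T3Space (PowerSeries ℚ) := by
  let _ : TopologicalSpace ℚ := ⊥
  have : DiscreteTopology ℚ := ⟨rfl⟩
  have := PowerSeries.WithPiTopology.instIsTopologicalRing ℚ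
  have := PowerSeries.WithPiTopology.instT0Space ℚ
  infer_instance

theorem tendsto_powerSeries_rat_of_eventually_coeff_eq {ι : Type*} {l : Filter ι}
    {f : ι → PowerSeries ℚ} {g : PowerSeries ℚ}
    (h : ∀ n, ∀ᶠ i in l, PowerSeries.coeff n (f i) = PowerSeries.coeff n g) :
    Filter.Tendsto f l (nhds g) := by
  let _ : TopologicalSpace ℚ := ⊥
  exact (PowerSeries.WithPiTopology.tendsto_iff_coeff_tendsto ℚ _ _ _).2 fun n =>
    tendsto_const_nhds.congr' ((h n).mono fun _ => Eq.symm)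

theorem multipliable_inv_one_sub_X_pow_pow {w : ℕ → ℕ} (hw : ∀ k, k < w k) (N : ℕ → ℕ) :
    Multipliable fun k => (((1 : PowerSeries ℚ) - PowerSeries.X ^ w k) ^ N k)⁻¹ := by
  let _ : TopologicalSpace ℚ := ⊥
  have le_order (k : ℕ) :
      (w k : ℕ∞) ≤ ((((1 : PowerSeries ℚ) - PowerSeries.X ^ w k) ^ N k)⁻¹ - 1).order :=
    PowerSeries.nat_le_order _ _ <| PowerSeries.X_pow_dvd_iff.1 <|
      X_pow_dvd_inv_one_sub_X_pow_pow_sub_one ((Nat.zero_le k).trans_lt (hw k)) (N k)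
  refine (PowerSeries.WithPiTopology.multipliable_one_add_of_tendsto_order_atTop_nhds_top
    (f := fun k => (((1 : PowerSeries ℚ) - PowerSeries.X ^ w k) ^ N k)⁻¹ - 1) ℚ ?_).congr
      fun k => add_sub_cancel _ _
  refine ENat.tendsto_nhds_top_iff_natCast_lt.2 fun n => ?_
  filter_upwards [Filter.eventually_ge_atTop n] with k hk
  exact (Nat.cast_lt.2 (hk.trans_lt (hw k))).trans_le (le_order k)

end FormalPowerSeries

section DegreeSeries

variable {R : Type*} [CommRing R]

theorem finite_setOf_natDegree_eq [Finite R] (n : ℕ) : {c : R[X] | c.natDegree = n}.Finite := by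
  refine Set.Finite.of_injOn (f := fun c i => c.coeff (i : Fin (n + 1))) (t := Set.univ)
    (fun _ _ => Set.mem_univ _) ?_ (Set.toFinite _)
  intro c hc d hd h
  refine ext_iff_natDegree_le hc.le hd.le |>.2 fun i hi => ?_
  exact congrFun h ⟨i, Nat.lt_succ_of_le hi⟩

/-- The generating function of a set of polynomials by degree. It is meaningful only when the set
has finitely many members of each degree. -/
noncomputable def degreeSeries (S : Set R[X]) : PowerSeries ℚ :=
  PowerSeries.mk fun n => ({c ∈ S | c.natDegree = n}.ncard : ℚ)

theorem degreeSeries_union_of_disjoint [Finite R] {S T : Set R[X]} (h : Disjoint S T) :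
    degreeSeries (S ∪ T) = degreeSeries S + degreeSeries T := by
  ext n
  have finite (U : Set R[X]) : {c ∈ U | c.natDegree = n}.Finite :=
    (finite_setOf_natDegree_eq n).subset fun _ hc => hc.2
  have union_eq : {c ∈ S ∪ T | c.natDegree = n} =
      {c ∈ S | c.natDegree = n} ∪ {c ∈ T | c.natDegree = n} := by
    ext c
    exact or_and_right
  simp only [degreeSeries, map_add, PowerSeries.coeff_mk]
  rw [union_eq, Set.ncard_union_eq (h.mono (fun _ hc => hc.1) fun _ hc => hc.1)
    (finite S) (finite T), Nat.cast_add]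

theorem degreeSeries_image_mul_left {P : R[X]} {S : Set R[X]} (hP : P.Monic)
    (hS : ∀ c ∈ S, c.Monic) :
    degreeSeries ((P * ·) '' S) = degreeSeries S * PowerSeries.X ^ P.natDegree := by
  ext n
  rw [PowerSeries.coeff_mul_X_pow']
  simp only [degreeSeries, PowerSeries.coeff_mk]
  split_ifs with hn
  · rw [← Set.ncard_image_of_injective {c ∈ S | c.natDegree = n - P.natDegree}
      hP.isRegular.left]
    congr 2
    ext c
    constructor
    · rintro ⟨⟨b, hb, rfl⟩, hc⟩
      simp only [hP.natDegree_mul (hS b hb)] at hc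
      exact ⟨b, ⟨hb, by omega⟩, rfl⟩
    · rintro ⟨b, ⟨hb, hd⟩, rfl⟩
      exact ⟨⟨b, hb, rfl⟩, by simp only [hP.natDegree_mul (hS b hb)]; omega⟩
  · rw [Nat.cast_eq_zero]
    convert Set.ncard_empty R[X]
    rw [Set.eq_empty_iff_forall_notMem]
    rintro _ ⟨⟨b, hb, rfl⟩, hc⟩
    simp only [hP.natDegree_mul (hS b hb)] at hc
    omega

variable {P c : R[X]} {𝒜 : Set R[X]}

theorem monic_of_mem_closure (h𝒜 : ∀ P ∈ 𝒜, P.Monic) (hc : c ∈ Submonoid.closure 𝒜) :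
    c.Monic := by
  induction hc using Submonoid.closure_induction with
  | mem c hc => exact h𝒜 c hc
  | one => exact monic_one
  | mul a b _ _ ha hb => exact ha.mul hb

theorem isCoprime_of_mem_closure (h𝒜 : ∀ Q ∈ 𝒜, IsCoprime P Q)
    (hc : c ∈ Submonoid.closure 𝒜) : IsCoprime P c := by
  induction hc using Submonoid.closure_induction with
  | mem c hc => exact h𝒜 c hc
  | one => exact isCoprime_one_right
  | mul a b _ _ ha hb => exact ha.mul_right hb

theorem closure_insert_eq_union {M : Type*} [CommMonoid M] (a : M) (s : Set M) :
    (Submonoid.closure (insert a s) : Set M) =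
      (Submonoid.closure s : Set M) ∪ (a * ·) '' Submonoid.closure (insert a s) := by
  ext c
  refine ⟨fun hc => ?_, ?_⟩
  · induction hc using Submonoid.closure_induction_left with
    | one => exact Or.inl (one_mem _)
    | mul_left x hx y hy ih =>
      rcases hx with rfl | hx
      · exact Or.inr ⟨y, hy, rfl⟩
      · rcases ih with ih | ⟨z, hz, rfl⟩
        · exact Or.inl (mul_mem (Submonoid.subset_closure hx) ih)
        · exact Or.inr ⟨x * z, mul_mem (Submonoid.subset_closure (Or.inr hx)) hz,
            mul_left_comm a x z⟩
  · rintro (hc | ⟨z, hz, rfl⟩)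
    · exact Submonoid.closure_mono (Set.subset_insert a s) hc
    · exact mul_mem (Submonoid.subset_closure (Set.mem_insert a s)) hz

theorem degreeSeries_closure_insert [Finite R] (hP : P.Monic) (hd : 0 < P.natDegree)
    (h𝒜 : ∀ Q ∈ 𝒜, Q.Monic) (hcop : ∀ Q ∈ 𝒜, IsCoprime P Q) :
    degreeSeries (Submonoid.closure (insert P 𝒜) : Set R[X]) =
      (1 - PowerSeries.X ^ P.natDegree)⁻¹ *
        degreeSeries (Submonoid.closure 𝒜 : Set R[X]) := by
  have disjoint : Disjoint (Submonoid.closure 𝒜 : Set R[X])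
      ((P * ·) '' Submonoid.closure (insert P 𝒜)) := by
    rw [Set.disjoint_right]
    rintro _ ⟨b, -, rfl⟩ hc
    have unit := (isCoprime_of_mem_closure hcop hc).isUnit_of_dvd' dvd_rfl (dvd_mul_right P b)
    simp [hP.eq_one_of_isUnit unit] at hd
  have recursion := degreeSeries_union_of_disjoint disjoint
  rw [← closure_insert_eq_union, degreeSeries_image_mul_left hP fun c hc =>
    monic_of_mem_closure (Set.forall_mem_insert.2 ⟨hP, h𝒜⟩) hc] at recursion
  rw [mul_comm, PowerSeries.eq_mul_inv_iff_mul_eq (by simp [hd.ne'])]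
  linear_combination recursion

theorem degreeSeries_closure_empty :
    degreeSeries (Submonoid.closure (∅ : Set R[X]) : Set R[X]) = 1 := by
  ext n
  simp only [degreeSeries, PowerSeries.coeff_mk, PowerSeries.coeff_one, Submonoid.closure_empty,
    Submonoid.coe_bot, Set.mem_singleton_iff]
  split_ifs with hn
  · rw [Nat.cast_eq_one, Set.ncard_eq_one]
    refine ⟨1, Set.ext fun c => ⟨fun hc => hc.1, ?_⟩⟩
    rintro rfl
    exact ⟨rfl, natDegree_one.trans hn.symm⟩
  · rw [Nat.cast_eq_zero]
    convert Set.ncard_empty R[X]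
    rw [Set.eq_empty_iff_forall_notMem]
    rintro _ ⟨rfl, h⟩
    exact hn (h.symm.trans natDegree_one)

theorem degreeSeries_closure_finset [Finite R] {s : Finset R[X]} (hm : ∀ P ∈ s, P.Monic)
    (hd : ∀ P ∈ s, 0 < P.natDegree) (hcop : (s : Set R[X]).Pairwise IsCoprime) :
    degreeSeries (Submonoid.closure (s : Set R[X]) : Set R[X]) =
      ∏ P ∈ s, (1 - PowerSeries.X ^ P.natDegree)⁻¹ := by
  classical
  induction s using Finset.induction_on with
  | empty => simpa using degreeSeries_closure_empty
  | insert P s hP ih =>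
    rw [Finset.forall_mem_insert] at hm hd
    rw [Finset.coe_insert] at hcop ⊢
    rw [degreeSeries_closure_insert hm.1 hd.1 hm.2 fun Q hQ => hcop (Set.mem_insert P _)
        (Set.mem_insert_of_mem P hQ) (ne_of_mem_of_not_mem hQ hP).symm,
      ih hm.2 hd.2 (hcop.mono (Set.subset_insert P _)), Finset.prod_insert hP]

theorem coeff_degreeSeries_closure_congr {𝒯 : Set R[X]} {n : ℕ} (h𝒜 : ∀ P ∈ 𝒜, P.Monic)
    (h𝒯 : 𝒯 ⊆ 𝒜) (h : ∀ P ∈ 𝒜, P.natDegree ≤ n → P ∈ 𝒯) :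
    PowerSeries.coeff n (degreeSeries (Submonoid.closure 𝒯 : Set R[X])) =
      PowerSeries.coeff n (degreeSeries (Submonoid.closure 𝒜 : Set R[X])) := by
  simp only [degreeSeries, PowerSeries.coeff_mk]
  congr 2
  ext c
  refine and_congr_left fun hn => ⟨fun hc => Submonoid.closure_mono h𝒯 hc, fun hc => ?_⟩
  obtain ⟨s, hs, rfl⟩ := Submonoid.exists_multiset_of_mem_closure hc
  refine Submonoid.multiset_prod_mem _ _ fun Q hQ => Submonoid.subset_closure (h Q (hs Q hQ) ?_)
  obtain ⟨t, rfl⟩ := Multiset.exists_cons_of_mem hQ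
  have monic_prod : t.prod.Monic := monic_of_mem_closure h𝒜 <|
    Submonoid.multiset_prod_mem _ _ fun P hP =>
      Submonoid.subset_closure (hs P (Multiset.mem_cons_of_mem hP))
  rw [Multiset.prod_cons, (h𝒜 Q (hs Q hQ)).natDegree_mul monic_prod] at hn
  omega

theorem hasProd_degreeSeries_closure [Finite R] (hm : ∀ P ∈ 𝒜, P.Monic)
    (hd : ∀ P ∈ 𝒜, 0 < P.natDegree) (hcop : 𝒜.Pairwise IsCoprime) :
    HasProd (fun P : 𝒜 => (1 - PowerSeries.X ^ (P : R[X]).natDegree : PowerSeries ℚ)⁻¹)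
      (degreeSeries (Submonoid.closure 𝒜 : Set R[X])) := by
  classical
  refine tendsto_powerSeries_rat_of_eventually_coeff_eq fun n => ?_
  have finite : {P : 𝒜 | (P : R[X]).natDegree ≤ n}.Finite :=
    .preimage (s := {P : R[X] | P.natDegree ≤ n}) Subtype.val_injective.injOn <|
      (Set.finite_Iic n).preimage' fun d _ => finite_setOf_natDegree_eq d
  filter_upwards [Filter.eventually_ge_atTop finite.toFinset] with s hs
  have mem_of_mem_map {P : R[X]} (hP : P ∈ s.map (.subtype _)) : P ∈ 𝒜 :=
    Finset.property_of_mem_map_subtype s hP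
  rw [← coeff_degreeSeries_closure_congr (𝒯 := s.map (.subtype _)) hm (fun _ => mem_of_mem_map)
      fun P hP hn => Finset.mem_coe.2 (Finset.mem_map_of_mem _ (@hs ⟨P, hP⟩ (by simpa))),
    degreeSeries_closure_finset (fun P hP => hm P (mem_of_mem_map hP))
      (fun P hP => hd P (mem_of_mem_map hP)) (hcop.mono fun _ => mem_of_mem_map),
    Finset.prod_map]
  rfl

theorem degreeSeries_closure_iUnion [Finite R] {ι : Type*} [Fintype ι]
    {S : ι → ℕ → Set R[X]} {w : ι → ℕ → ℕ} (hw : ∀ i k, k < w i k)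
    (hm : ∀ i k, ∀ P ∈ S i k, P.Monic) (hd : ∀ i k, ∀ P ∈ S i k, P.natDegree = w i k)
    (hdisj : Pairwise (Function.onFun Disjoint fun x : ι × ℕ => S x.1 x.2))
    (hcop : (⋃ x : ι × ℕ, S x.1 x.2).Pairwise IsCoprime) :
    degreeSeries (Submonoid.closure (⋃ x : ι × ℕ, S x.1 x.2) : Set R[X]) =
      ∏ i, ∏' k, ((1 - PowerSeries.X ^ w i k) ^ (S i k).ncard)⁻¹ := by
  have euler := hasProd_degreeSeries_closure (𝒜 := ⋃ x : ι × ℕ, S x.1 x.2)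
    (fun P hP => let ⟨x, hx⟩ := Set.mem_iUnion.1 hP; hm _ _ P hx)
    (fun P hP => let ⟨x, hx⟩ := Set.mem_iUnion.1 hP
      (hd _ _ P hx).symm ▸ (Nat.zero_le _).trans_lt (hw x.1 x.2)) hcop
  have fiber (x : ι × ℕ) :
      HasProd (fun P : S x.1 x.2 => (1 - PowerSeries.X ^ (P : R[X]).natDegree : PowerSeries ℚ)⁻¹)
        ((1 - PowerSeries.X ^ w x.1 x.2) ^ (S x.1 x.2).ncard)⁻¹ := by
    have : Fintype (S x.1 x.2) :=
      ((finite_setOf_natDegree_eq (w x.1 x.2)).subset (hd x.1 x.2)).fintype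
    convert hasProd_fintype (fun P : S x.1 x.2 =>
      (1 - PowerSeries.X ^ (P : R[X]).natDegree : PowerSeries ℚ)⁻¹) using 1
    rw [Finset.prod_congr rfl fun P _ => by rw [hd _ _ _ P.2], Finset.prod_const,
      Finset.card_univ, Fintype.card_eq_nat_card, Nat.card_coe_set_eq, powerSeries_inv_pow]
  rw [← (Set.unionEqSigmaOfDisjoint hdisj).symm.hasProd_iff] at euler
  simp only [Function.comp_def, Set.coe_unionEqSigmaOfDisjoint_symm_apply] at euler
  exact ((euler.sigma fiber).prod_fiberwise fun i =>
    (multipliable_inv_one_sub_X_pow_pow (hw i) _).hasProd).unique (hasProd_fintype _)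

end DegreeSeries

/-! ### Counting the atoms -/

theorem ncard_image_eq_ncard_image {α β γ : Type*} {s : Set α} {u : α → β} {v : α → γ}
    (h : ∀ x ∈ s, ∀ y ∈ s, u x = u y ↔ v x = v y) : (u '' s).ncard = (v '' s).ncard := by
  obtain ⟨t, hts, bijOn⟩ := Set.exists_subset_bijOn s u
  have injOn : Set.InjOn v t := fun x hx y hy hxy =>
    bijOn.injOn hx hy ((h x (hts hx) y (hts hy)).2 hxy)
  have image_eq : v '' t = v '' s := by
    refine (Set.image_mono hts).antisymm ?_
    rintro _ ⟨x, hx, rfl⟩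
    obtain ⟨y, hy, hyx⟩ := bijOn.surjOn ⟨x, hx, rfl⟩
    exact ⟨y, hy, (h y (hts hy) x hx).1 hyx⟩
  rw [← bijOn.image_eq, ← image_eq, bijOn.injOn.ncard_image, injOn.ncard_image]

section AtomKinds

variable {F : Type*} [Field F] {σ : F →+* F} {M : ℕ} {x : Bool × Bool} {d : ℕ} {f g : F[X]}

/-- The irreducible polynomials of degree `d`, other than `X`, that are self-conjugate when
`x.1 = true` and not when `x.1 = false`, and likewise power factors according to `x.2`. -/
def minpolysOfKind (σ : F →+* F) (M : ℕ) (x : Bool × Bool) (d : ℕ) : Set F[X] :=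
  {f | IsUnitMinpoly f ∧ (IsSCIM σ f ↔ x.1) ∧ (IsPowerFactor σ M f ↔ x.2) ∧ f.natDegree = d}

/-- The degree of the irreducible polynomials attached to the `k`-th factor of the infinite product
of the kind `x`: self-conjugate polynomials have odd degree. -/
def kindDegree (x : Bool × Bool) (k : ℕ) : ℕ :=
  if x.1 then 2 * k + 1 else k + 1

/-- The degree of the atoms attached to the `k`-th factor of the infinite product of the
kind `x`. -/
def kindWeight (M : ℕ) : Bool × Bool → ℕ → ℕ
  | (true, true), k => 2 * k + 1
  | (false, true), k => 2 * (k + 1)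
  | (true, false), k => (2 * k + 1) * M
  | (false, false), k => 2 * (k + 1) * M

theorem lt_kindWeight (hM : 0 < M) (x : Bool × Bool) (k : ℕ) : k < kindWeight M x k := by
  have le_mul (a : ℕ) : a ≤ a * M := Nat.le_mul_of_pos_right a hM
  rcases x with ⟨_ | _, _ | _⟩ <;> simp only [kindWeight]
  · exact (by omega : k < 2 * (k + 1)).trans_le (le_mul _)
  · omega
  · exact (by omega : k < 2 * k + 1).trans_le (le_mul _)
  · omega

theorem natDegree_powerAtom_of_mem_minpolysOfKind {k : ℕ}
    (hf : f ∈ minpolysOfKind σ M x (kindDegree x k)) :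
    (powerAtom σ M f).natDegree = kindWeight M x k := by
  obtain ⟨hf, hs, hp, hd⟩ := hf
  have natDegree_mul : (f * tildePoly σ f).natDegree = 2 * f.natDegree := by
    rw [hf.1.natDegree_mul (monic_tildePoly σ hf.2.2), natDegree_tildePoly σ hf.2.2, two_mul]
  rw [powerAtom, selfConjBase]
  rcases x with ⟨_ | _, _ | _⟩ <;>
    simp_all [kindDegree, kindWeight, natDegree_pow, mul_comm M]

theorem kindDegree_injective (x : Bool × Bool) : Function.Injective (kindDegree x) := by
  intro k l h
  unfold kindDegree at h
  split_ifs at h <;> omega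

theorem disjoint_image_powerAtom_minpolysOfKind (hσ : Function.Involutive σ) (hM : 0 < M) :
    Pairwise (Function.onFun Disjoint fun i : (Bool × Bool) × ℕ =>
      powerAtom σ M '' minpolysOfKind σ M i.1 (kindDegree i.1 i.2)) := by
  rintro ⟨x, k⟩ ⟨y, l⟩ hne
  refine Set.disjoint_left.2 ?_
  rintro _ ⟨f, ⟨hf, hsf, hpf, hdf⟩, rfl⟩ ⟨g, ⟨hg, hsg, hpg, hdg⟩, hfg⟩
  refine hne ?_
  have same_kind : (IsSCIM σ g ↔ IsSCIM σ f) ∧ (IsPowerFactor σ M g ↔ IsPowerFactor σ M f) ∧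
      g.natDegree = f.natDegree := by
    rcases (powerAtom_eq_powerAtom_iff hσ hM hf hg).1 hfg with rfl | rfl
    · exact ⟨Iff.rfl, Iff.rfl, rfl⟩
    · exact ⟨hf.isSCIM_tildePoly_iff hσ, hf.isPowerFactor_tildePoly_iff hσ hM,
        natDegree_tildePoly σ hf.2.2⟩
  rw [hsf, hsg, hpf, hpg, hdf, hdg, ← Bool.eq_iff_iff, ← Bool.eq_iff_iff] at same_kind
  obtain rfl : y = x := Prod.ext same_kind.1 same_kind.2.1
  exact congrArg _ (kindDegree_injective y same_kind.2.2).symm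

theorem powerAtoms_eq_iUnion (hodd : ∀ f, IsSCIM σ f → Odd f.natDegree) :
    powerAtoms σ M = ⋃ i : (Bool × Bool) × ℕ,
      powerAtom σ M '' minpolysOfKind σ M i.1 (kindDegree i.1 i.2) := by
  classical
  rw [powerAtoms, ← Set.image_iUnion]
  congr 1
  ext f
  simp only [Set.mem_iUnion, Set.mem_ofPred_eq]
  refine ⟨fun hf => ?_, fun ⟨_, hf⟩ => hf.1⟩
  let x : Bool × Bool := (decide (IsSCIM σ f), decide (IsPowerFactor σ M f))
  obtain ⟨k, hk⟩ : ∃ k, f.natDegree = kindDegree x k := by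
    by_cases hs : IsSCIM σ f
    · simpa [kindDegree, x, hs, Odd] using hodd f hs
    · exact ⟨f.natDegree - 1, by simp [kindDegree, x, hs, Nat.sub_add_cancel hf.2.1.natDegree_pos]⟩
  exact ⟨(x, k), hf, by simp [x], by simp [x], hk⟩

theorem degreeSeries_setOf_isPowerAdmissible [Finite F] (hσ : Function.Involutive σ) (hM : 0 < M)
    (hodd : ∀ f, IsSCIM σ f → Odd f.natDegree) :
    degreeSeries {c | IsPowerAdmissible σ M c} =
      ∏ x, ∏' k, ((1 - PowerSeries.X ^ kindWeight M x k) ^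
        (powerAtom σ M '' minpolysOfKind σ M x (kindDegree x k)).ncard)⁻¹ := by
  have closure_eq : {c | IsPowerAdmissible σ M c} = Submonoid.closure (powerAtoms σ M) :=
    Set.ext fun c => isPowerAdmissible_iff_mem_closure hσ hM
  rw [closure_eq, powerAtoms_eq_iUnion hodd]
  refine degreeSeries_closure_iUnion
    (S := fun x k => powerAtom σ M '' minpolysOfKind σ M x (kindDegree x k))
    (lt_kindWeight hM) ?_ ?_ (disjoint_image_powerAtom_minpolysOfKind hσ hM) ?_
  · rintro x k _ ⟨f, hf, rfl⟩
    exact hf.1.monic_powerAtom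
  · rintro x k _ ⟨f, hf, rfl⟩
    exact natDegree_powerAtom_of_mem_minpolysOfKind hf
  · rw [← powerAtoms_eq_iUnion hodd]
    rintro _ ⟨f, hf, rfl⟩ _ ⟨g, hg, rfl⟩ hfg
    exact isCoprime_powerAtom hσ hM hf hg hfg

theorem isPowerFactor_iff_of_isSCIM (hs : IsSCIM σ f) :
    IsPowerFactor σ M f ↔ IsMtildePowerPoly σ M f :=
  or_iff_left fun h => h.1 hs

theorem isPowerFactor_iff_of_not_isSCIM (hs : ¬ IsSCIM σ f) :
    IsPowerFactor σ M f ↔ IsMPowerPoly M f :=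
  (or_iff_right fun h => hs h.1).trans (and_iff_right hs)

theorem isNonSelfConj_iff : IsNonSelfConj σ f ↔ IsUnitMinpoly f ∧ ¬ IsSCIM σ f := by
  unfold IsNonSelfConj IsUnitMinpoly IsSCIM
  grind

theorem ncard_powerAtom_image_of_isSCIM (hσ : Function.Involutive σ) (hM : 0 < M) (e : Bool) :
    (powerAtom σ M '' minpolysOfKind σ M (true, e) d).ncard =
      (minpolysOfKind σ M (true, e) d).ncard := by
  refine Set.InjOn.ncard_image fun f hf g hg h => ?_
  rcases (powerAtom_eq_powerAtom_iff hσ hM hg.1 hf.1).1 h with h | h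
  · exact h
  · exact h.trans (hg.2.1.2 rfl).2.2.2

theorem ncard_powerAtom_image_eq_ncard_conjPairs (hσ : Function.Involutive σ) (hM : 0 < M) :
    (powerAtom σ M '' minpolysOfKind σ M x d).ncard =
      ((fun f => s(f, tildePoly σ f)) '' minpolysOfKind σ M x d).ncard := by
  refine ncard_image_eq_ncard_image fun f hf g hg => ?_
  rw [powerAtom_eq_powerAtom_iff hσ hM hg.1 hf.1, Sym2.eq_iff]
  refine or_congr ⟨fun h => ⟨h, h ▸ rfl⟩, And.left⟩ ⟨fun h => ⟨h, ?_⟩, And.left⟩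
  rw [h, hg.1.tildePoly_tildePoly hσ]

theorem ncard_powerAtom_image_true_true (hσ : Function.Involutive σ) (hM : 0 < M) :
    (powerAtom σ M '' minpolysOfKind σ M (true, true) d).ncard = NtildeM σ M d := by
  rw [ncard_powerAtom_image_of_isSCIM hσ hM, ← Nat.card_coe_set_eq]
  refine Nat.card_congr (Equiv.subtypeEquivRight fun f => ⟨?_, ?_⟩)
  · rintro ⟨-, hs, hp, hd⟩
    exact ⟨(isPowerFactor_iff_of_isSCIM (hs.2 rfl)).1 (hp.2 rfl), hd⟩
  · rintro ⟨hp, hd⟩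
    exact ⟨⟨hp.1.1, hp.1.2.1, hp.1.2.2.1⟩, by simpa using hp.1,
      by simpa using (isPowerFactor_iff_of_isSCIM hp.1).2 hp, hd⟩

theorem ncard_powerAtom_image_true_false (hσ : Function.Involutive σ) (hM : 0 < M) :
    (powerAtom σ M '' minpolysOfKind σ M (true, false) d).ncard = StildePrimeM σ M d := by
  rw [ncard_powerAtom_image_of_isSCIM hσ hM, ← Nat.card_coe_set_eq]
  refine Nat.card_congr (Equiv.subtypeEquivRight fun f => ⟨?_, ?_⟩)
  · rintro ⟨-, hs, hp, hd⟩
    exact ⟨hs.2 rfl, hd, by simpa [isPowerFactor_iff_of_isSCIM (hs.2 rfl)] using hp⟩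
  · rintro ⟨hs, hd, hp⟩
    exact ⟨⟨hs.1, hs.2.1, hs.2.2.1⟩, by simpa using hs,
      by simpa [isPowerFactor_iff_of_isSCIM hs] using hp, hd⟩

theorem ncard_powerAtom_image_false_true (hσ : Function.Involutive σ) (hM : 0 < M) :
    (powerAtom σ M '' minpolysOfKind σ M (false, true) d).ncard = RtildeM σ M d := by
  rw [ncard_powerAtom_image_eq_ncard_conjPairs hσ hM, ← Nat.card_coe_set_eq]
  refine Nat.card_congr (Equiv.subtypeEquivRight fun B => ⟨?_, ?_⟩)
  · rintro ⟨f, ⟨hf, hs, hp, hd⟩, rfl⟩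
    have hs : ¬ IsSCIM σ f := by simpa using hs
    exact ⟨f, isNonSelfConj_iff.2 ⟨hf, hs⟩, hd,
      by simpa [isPowerFactor_iff_of_not_isSCIM hs] using hp, rfl⟩
  · rintro ⟨f, hf, hd, hp, rfl⟩
    obtain ⟨hf, hs⟩ := isNonSelfConj_iff.1 hf
    exact ⟨f, ⟨hf, by simpa using hs, by simpa [isPowerFactor_iff_of_not_isSCIM hs] using hp, hd⟩,
      rfl⟩

theorem ncard_powerAtom_image_false_false (hσ : Function.Involutive σ) (hM : 0 < M) :
    (powerAtom σ M '' minpolysOfKind σ M (false, false) d).ncard = SPrimeM σ M d := by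
  rw [ncard_powerAtom_image_eq_ncard_conjPairs hσ hM, ← Nat.card_coe_set_eq]
  refine Nat.card_congr (Equiv.subtypeEquivRight fun B => ⟨?_, ?_⟩)
  · rintro ⟨f, ⟨hf, hs, hp, hd⟩, rfl⟩
    have hs : ¬ IsSCIM σ f := by simpa using hs
    exact ⟨f, isNonSelfConj_iff.2 ⟨hf, hs⟩, hd,
      by simpa [isPowerFactor_iff_of_not_isSCIM hs] using hp, rfl⟩
  · rintro ⟨f, hf, hd, hp, rfl⟩
    obtain ⟨hf, hs⟩ := isNonSelfConj_iff.1 hf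
    exact ⟨f, ⟨hf, by simpa using hs, by simpa [isPowerFactor_iff_of_not_isSCIM hs] using hp, hd⟩,
      rfl⟩

theorem mk_numSSPowerClasses_eq_degreeSeries [Finite F] (hσ : Function.Involutive σ)
    (hne : ∃ x, σ x ≠ x) (hM : M.Prime) (hMF : (M : F) ≠ 0) :
    (PowerSeries.mk fun n => if n = 0 then (1 : ℚ) else (numSSPowerClasses σ M n : ℚ)) =
      degreeSeries {c | IsPowerAdmissible σ M c} := by
  have eq_singleton : {c | IsPowerAdmissible σ M c ∧ c.natDegree = 0} = {1} := by
    refine Set.eq_singleton_iff_unique_mem.2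
      ⟨⟨isPowerAdmissible_one σ M, natDegree_one⟩, fun c hc => ?_⟩
    exact hc.1.1.natDegree_eq_zero.1 hc.2
  ext n
  rw [degreeSeries, PowerSeries.coeff_mk, PowerSeries.coeff_mk]
  split_ifs with hn
  · rw [hn]
    simp only [Set.mem_ofPred_eq, eq_singleton, Set.ncard_singleton, Nat.cast_one]
  · rw [numSSPowerClasses_eq hσ hne hM hMF n]
    rfl

end AtomKinds

theorem exists_pow_ne_self {K : Type*} [Field K] [Fintype K] {q : ℕ} (hq : 1 < q)
    (hK : q < Fintype.card K) : ∃ x : K, x ^ q ≠ x := by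
  by_contra! h
  refine FiniteField.X_pow_card_sub_X_ne_zero K hq ?_
  refine eq_zero_of_natDegree_lt_card_of_eval_eq_zero _ Function.injective_id (fun x => ?_) ?_
  · simp [h x]
  · rwa [FiniteField.X_pow_card_sub_X_natDegree_eq K hq]

/-- Generating function for the conjugacy classes of semisimple `M`-th powers in `U(n,q²)`,
for a prime `M` coprime to `q`. Odd `d` are enumerated as `2k+1` and `d ≥ 1` as `k+1`;
negative exponents are inverses in `ℚ[[z]]`, and all four infinite products converge. -/
theorem statement13 (p ℓ q : ℕ) (hp : p.Prime) (hℓ : 0 < ℓ) (hq : q = p ^ ℓ)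
    (F : Type*) [Field F] [Fintype F] (hF : Fintype.card F = q ^ 2)
    (σ : F →+* F) (hσ : ∀ x : F, σ x = x ^ q)
    (M : ℕ) (hM : M.Prime) (hcop : Nat.gcd M q = 1) :
    (Multipliable fun k : ℕ => (((1 : PowerSeries ℚ) - PowerSeries.X ^ (2 * k + 1)) ^
        NtildeM σ M (2 * k + 1))⁻¹) ∧
    (Multipliable fun k : ℕ => (((1 : PowerSeries ℚ) - PowerSeries.X ^ (2 * (k + 1))) ^
        RtildeM σ M (k + 1))⁻¹) ∧
    (Multipliable fun k : ℕ => (((1 : PowerSeries ℚ) - PowerSeries.X ^ ((2 * k + 1) * M)) ^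
        StildePrimeM σ M (2 * k + 1))⁻¹) ∧
    (Multipliable fun k : ℕ => (((1 : PowerSeries ℚ) - PowerSeries.X ^ (2 * (k + 1) * M)) ^
        SPrimeM σ M (k + 1))⁻¹) ∧
    (PowerSeries.mk fun n => if n = 0 then (1 : ℚ) else (numSSPowerClasses σ M n : ℚ)) =
      (∏' k : ℕ, (((1 : PowerSeries ℚ) - PowerSeries.X ^ (2 * k + 1)) ^
          NtildeM σ M (2 * k + 1))⁻¹) *
      (∏' k : ℕ, (((1 : PowerSeries ℚ) - PowerSeries.X ^ (2 * (k + 1))) ^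
          RtildeM σ M (k + 1))⁻¹) *
      (∏' k : ℕ, (((1 : PowerSeries ℚ) - PowerSeries.X ^ ((2 * k + 1) * M)) ^
          StildePrimeM σ M (2 * k + 1))⁻¹) *
      (∏' k : ℕ, (((1 : PowerSeries ℚ) - PowerSeries.X ^ (2 * (k + 1) * M)) ^
          SPrimeM σ M (k + 1))⁻¹) := by
  subst hq
  have : Fact p.Prime := ⟨hp⟩
  have : CharP F p := charP_of_card_eq_prime_pow (f := ℓ * 2) (by rw [hF, pow_mul])
  have one_lt_q : 1 < p ^ ℓ := Nat.one_lt_pow hℓ.ne' hp.one_lt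
  have hMF : (M : F) ≠ 0 := fun h => hp.not_dvd_one <|
    hcop ▸ Nat.dvd_gcd ((CharP.cast_eq_zero_iff F p M).1 h) (dvd_pow_self p hℓ.ne')
  have hσσ : Function.Involutive σ := fun x => by
    rw [hσ, hσ, ← pow_mul, ← sq, ← hF, FiniteField.pow_card]
  have hne : ∃ x, σ x ≠ x := by
    simpa only [hσ] using exists_pow_ne_self one_lt_q
      (hF ▸ lt_self_pow₀ one_lt_q one_lt_two : p ^ ℓ < Fintype.card F)
  have multipliable := fun x => multipliable_inv_one_sub_X_pow_pow (lt_kindWeight hM.pos x)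
  refine ⟨multipliable (true, true) _, multipliable (false, true) _, multipliable (true, false) _,
    multipliable (false, false) _, ?_⟩
  rw [mk_numSSPowerClasses_eq_degreeSeries hσσ hne hM hMF,
    degreeSeries_setOf_isPowerAdmissible hσσ hM.pos fun f hf => hf.odd_natDegree hF hσ hσσ]
  simp only [Fintype.prod_prod_type, Fintype.prod_bool, ncard_powerAtom_image_true_true hσσ hM.pos,
    ncard_powerAtom_image_false_true hσσ hM.pos, ncard_powerAtom_image_true_false hσσ hM.pos,
    ncard_powerAtom_image_false_false hσσ hM.pos, kindWeight, kindDegree, if_true,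
    Bool.false_eq_true, if_false]
  rw [mul_mul_mul_comm, ← mul_assoc]
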